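/- arXiv:1605.07473 — 8 statements merged into one kernel-verified Lean document; each statement's English description precedes it below -/
import Mathlib

section
/- Let $g \ge 2$ and $d \ge 1$ be integers. Then for any Gopakumar–Vafa data $(G, n)$, the Gromov–Witten number defined by the GV expansion satisfies the abc-formula: $\sum_{m \mid d} \sum_{h=0}^{G(m)} c_{h,g}\, n_h^{(m)} \left(\tfrac{d}{m}\right)^{2g-3} \;=\; f_g^{CS} \sum_{m \mid d} n_0^{(m)} \left(\tfrac{d}{m}\right)^{2g-3} \;+\; \frac{(-1)^{g-1}}{(2g-2)!}\,\frac{1}{d} \sum_{m \ge 1} b_{d,m}\, m^{2g-2}$, where in the last sum all but finitely many of the integers $b_{d,m}$ vanish. -/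
open Finset

/-- `f_g^CS = (-1)^(g-1) B_{2g} / (2g (2g-2)!)` for `g ≥ 1`. -/
noncomputable def fCS (g : ℕ) : ℝ :=
  (-1) ^ (g - 1) * ((bernoulli (2 * g) : ℚ) : ℝ) / (2 * g * Nat.factorial (2 * g - 2))

/-- The coefficients `c_{h,g}` of the GV-to-GW conversion, for `g ≥ 2`. -/
noncomputable def cCoeff (h g : ℕ) : ℝ :=
  if h = 0 then fCS g
  else if h = 1 then 0
  else (-1) ^ (g - 1) * 2 / (Nat.factorial (2 * g - 2)) *
    ∑ k ∈ Finset.Icc 1 (h - 1),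
      (Nat.choose (2 * h - 2) (h - 1 + k) : ℝ) * (-1) ^ k * (k : ℝ) ^ (2 * g - 2)

/-- The integer coefficients `b_{d,m}` built from Gopakumar–Vafa data `(G, n)`. -/
def bCoeff (G : ℕ → ℕ) (n : ℕ → ℕ → ℤ) (d m : ℕ) : ℤ :=
  ∑ k ∈ (Nat.gcd d m).divisors,
    (-1) ^ (m / k) * (2 * (d / k) : ℤ) *
      ∑ h ∈ Finset.Icc (m / k + 1) (G (d / k)),
        (Nat.choose (2 * h - 2) (h - 1 + m / k) : ℤ) * n h (d / k)

/-- inner sum -/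
def aSum (G : ℕ → ℕ) (n : ℕ → ℕ → ℤ) (e j : ℕ) : ℤ :=
  ∑ h ∈ Finset.Icc (j + 1) (G e), (Nat.choose (2 * h - 2) (h - 1 + j) : ℤ) * n h e

lemma cCoeff_pos (h g N : ℕ) (hh : 1 ≤ h) (hN : h ≤ N) :
    cCoeff h g = (-1) ^ (g - 1) / (Nat.factorial (2 * g - 2)) *
      ∑ j ∈ Finset.Icc 1 N, 2 * (-1) ^ j * (j : ℝ) ^ (2 * g - 2) *
        (Nat.choose (2 * h - 2) (h - 1 + j) : ℝ) := by
  have key : ∑ j ∈ Finset.Icc 1 N, 2 * (-1) ^ j * (j : ℝ) ^ (2 * g - 2) *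
        (Nat.choose (2 * h - 2) (h - 1 + j) : ℝ) = ∑ j ∈ Finset.Icc 1 (h - 1),
        2 * (-1) ^ j * (j : ℝ) ^ (2 * g - 2) *
        (Nat.choose (2 * h - 2) (h - 1 + j) : ℝ) := by
    symm
    apply Finset.sum_subset
    · apply Finset.Icc_subset_Icc le_rfl; omega
    · intro j hj hj2
      simp only [Finset.mem_Icc] at hj hj2
      rw [Nat.choose_eq_zero_of_lt (by omega)]; simp
  rw [key]
  unfold cCoeff
  rw [if_neg (by omega)]
  split_ifs with h1
  · subst h1; simp
  · rw [Finset.mul_sum, Finset.mul_sum]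
    apply Finset.sum_congr rfl
    intro j _
    ring

lemma c_sum (G : ℕ → ℕ) (n : ℕ → ℕ → ℤ) (g m N : ℕ) (hN : G m ≤ N) :
    ∑ h ∈ Finset.range (G m + 1), cCoeff h g * (n h m : ℝ) =
      fCS g * (n 0 m : ℝ) + (-1) ^ (g - 1) / (Nat.factorial (2 * g - 2)) *
        ∑ j ∈ Finset.Icc 1 N, 2 * (-1) ^ j * (j : ℝ) ^ (2 * g - 2) * (aSum G n m j : ℝ) := by
  have h0 : ∑ h ∈ Finset.range (G m + 1), cCoeff h g * (n h m : ℝ) =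
      fCS g * (n 0 m : ℝ) + ∑ h ∈ Finset.Icc 1 (G m), cCoeff h g * (n h m : ℝ) := by
    rw [Finset.range_eq_Ico, Finset.sum_eq_sum_Ico_succ_bot (by omega)]
    congr 1
  have h1 : ∀ j, (aSum G n m j : ℝ) = ∑ h ∈ Finset.Icc 1 (G m),
      (Nat.choose (2 * h - 2) (h - 1 + j) : ℝ) * (n h m : ℝ) ∨ j < 1 := by
    intro j
    by_cases hj : j < 1
    · exact Or.inr hj
    left
    unfold aSum
    push_cast
    apply Finset.sum_subset
    · apply Finset.Icc_subset_Icc (by omega) le_rfl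
    · intro h hh hh2
      simp only [Finset.mem_Icc] at hh hh2
      rw [Nat.choose_eq_zero_of_lt (by omega)]; simp
  rw [h0]
  congr 1
  have h2 : ∀ j ∈ Finset.Icc 1 N,
      2 * (-1) ^ j * (j : ℝ) ^ (2 * g - 2) * (aSum G n m j : ℝ) =
      ∑ h ∈ Finset.Icc 1 (G m), 2 * (-1) ^ j * (j : ℝ) ^ (2 * g - 2) *
        (Nat.choose (2 * h - 2) (h - 1 + j) : ℝ) * (n h m : ℝ) := by
    intro j hj
    rw [(h1 j).resolve_right (by simp at hj; omega), Finset.mul_sum]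
    apply Finset.sum_congr rfl
    intro h _
    ring
  rw [Finset.sum_congr rfl h2, Finset.sum_comm, Finset.mul_sum]
  apply Finset.sum_congr rfl
  intro h hh
  simp only [Finset.mem_Icc] at hh
  rw [cCoeff_pos h g N hh.1 (by omega), mul_assoc, Finset.sum_mul]

lemma dil_sum (F : ℕ → ℝ) (N k d : ℕ) (hk : 1 ≤ k) (hkd : k ≤ d)
    (hF : ∀ j, N < j → F j = 0) :
    ∑ m ∈ Finset.range (d * N), (if k ∣ m + 1 then F ((m + 1) / k) else 0) =
      ∑ j ∈ Finset.Icc 1 N, F j := by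
  symm
  have pos : ∀ j, 1 ≤ j → 1 ≤ k * j := fun j hj => Nat.mul_pos hk hj
  apply Finset.sum_of_injOn (fun j => k * j - 1)
  · intro a ha b hb hab
    simp only [Finset.coe_Icc, Set.mem_Icc] at ha hb
    have h1 := pos a ha.1
    have h2 := pos b hb.1
    have : k * a = k * b := by simp only at hab; omega
    exact Nat.eq_of_mul_eq_mul_left hk this
  · intro a ha
    simp only [Finset.coe_Icc, Set.mem_Icc] at ha
    have h1 := pos a ha.1
    have h2 : k * a ≤ d * N := Nat.mul_le_mul hkd ha.2
    simp only [Finset.coe_range, Set.mem_Iio]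
    omega
  · intro m hm hm2
    split_ifs with hdv
    · obtain ⟨j, hj⟩ := hdv
      rw [hj, Nat.mul_div_cancel_left _ hk]
      apply hF
      by_contra hjN
      apply hm2
      refine ⟨j, ?_, ?_⟩
      · simp only [Finset.coe_Icc, Set.mem_Icc]
        refine ⟨?_, by omega⟩
        rcases Nat.eq_zero_or_pos j with h | h
        · subst h; simp at hj
        · exact h
      · simp only; omega
    · rfl
  · intro a ha
    simp only [Finset.mem_Icc] at ha
    have h1 := pos a ha.1
    have : k * a - 1 + 1 = k * a := by omega
    simp only [this]
    rw [if_pos (Dvd.intro _ rfl), Nat.mul_div_cancel_left _ hk]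

lemma aSum_zero (G : ℕ → ℕ) (n : ℕ → ℕ → ℤ) (e j : ℕ) (h : G e ≤ j) : aSum G n e j = 0 := by
  unfold aSum
  rw [Finset.Icc_eq_empty (by omega)]; simp

lemma bCoeff_eq (G : ℕ → ℕ) (n : ℕ → ℕ → ℤ) (d m : ℕ) (hd : 1 ≤ d) :
    bCoeff G n d m = ∑ k ∈ d.divisors, if k ∣ m then
      (-1) ^ (m / k) * (2 * ((d / k : ℕ) : ℤ)) * aSum G n (d / k) (m / k) else 0 := by
  rw [← Finset.sum_filter]
  unfold bCoeff aSum
  have : (Nat.gcd d m).divisors = d.divisors.filter (fun k => k ∣ m) := by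
    ext k
    have : Nat.gcd d m ≠ 0 := (Nat.gcd_pos_of_pos_left m hd).ne'
    have hd' : d ≠ 0 := by omega
    simp only [Nat.mem_divisors, Finset.mem_filter, Nat.dvd_gcd_iff]
    tauto
  rw [this]
  push_cast
  rfl

/-- the abc-formula for Gromov–Witten numbers defined by the GV expansion. -/
theorem abc_formula (G : ℕ → ℕ) (n : ℕ → ℕ → ℤ)
    (hGV : ∀ h m : ℕ, 1 ≤ m → G m < h → n h m = 0)
    (g d : ℕ) (hg : 2 ≤ g) (hd : 1 ≤ d) :
    {m : ℕ | bCoeff G n d (m + 1) ≠ 0}.Finite ∧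
    ∑ m ∈ d.divisors, ∑ h ∈ Finset.range (G m + 1),
        cCoeff h g * (n h m : ℝ) * ((d / m : ℕ) : ℝ) ^ (2 * g - 3)
      = fCS g * ∑ m ∈ d.divisors, (n 0 m : ℝ) * ((d / m : ℕ) : ℝ) ^ (2 * g - 3)
        + (-1) ^ (g - 1) / (Nat.factorial (2 * g - 2)) * (1 / d) *
            ∑' m : ℕ, (bCoeff G n d (m + 1) : ℝ) * ((m : ℝ) + 1) ^ (2 * g - 2) := by
  obtain ⟨N, hN⟩ : ∃ N, ∀ k ∈ d.divisors, G k ≤ N :=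
    ⟨d.divisors.sup G, fun k hk => Finset.le_sup hk⟩
  have hN' : ∀ k ∈ d.divisors, G (d / k) ≤ N := fun k hk =>
    hN _ (by
      rw [Nat.mem_divisors] at hk ⊢
      exact ⟨Nat.div_dvd_of_dvd hk.1, hk.2⟩)
  have hz : ∀ m, m ∉ Finset.range (d * N) → bCoeff G n d (m + 1) = 0 := by
    intro m hm
    rw [bCoeff_eq G n d _ hd]
    apply Finset.sum_eq_zero
    intro k hk
    split_ifs with hkm
    · rw [aSum_zero, mul_zero]
      apply (hN' k hk).trans
      rw [Nat.le_div_iff_mul_le (Nat.pos_of_mem_divisors hk)]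
      have : k * N ≤ d * N := Nat.mul_le_mul_right _ (Nat.divisor_le hk)
      simp only [Finset.mem_range] at hm
      rw [mul_comm]; omega
    · rfl
  constructor
  · apply (Finset.range (d * N)).finite_toSet.subset
    intro m hm
    by_contra h
    exact hm (hz m h)
  rw [tsum_eq_sum (s := Finset.range (d * N)) (fun m hm => by rw [hz m hm]; simp)]
  have hB : ∑ m ∈ Finset.range (d * N), (bCoeff G n d (m + 1) : ℝ) * ((m : ℝ) + 1) ^ (2 * g - 2)
      = ∑ k ∈ d.divisors, ∑ j ∈ Finset.Icc 1 N,
        (-1) ^ j * (2 * ((d / k : ℕ) : ℝ)) * (aSum G n (d / k) j : ℝ) *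
          ((k : ℝ) * j) ^ (2 * g - 2) := by
    have h1 : ∀ m ∈ Finset.range (d * N),
        (bCoeff G n d (m + 1) : ℝ) * ((m : ℝ) + 1) ^ (2 * g - 2) =
        ∑ k ∈ d.divisors, if k ∣ m + 1 then
          (fun j : ℕ => (-1) ^ j * (2 * ((d / k : ℕ) : ℝ)) * (aSum G n (d / k) j : ℝ) *
          ((k : ℝ) * j) ^ (2 * g - 2)) ((m + 1) / k) else 0 := by
      intro m _
      rw [bCoeff_eq G n d _ hd, Int.cast_sum, Finset.sum_mul]
      apply Finset.sum_congr rfl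
      intro k hk
      split_ifs with hkm
      · have : (k : ℝ) * (((m + 1) / k : ℕ) : ℝ) = (m : ℝ) + 1 := by
          rw [← Nat.cast_mul, Nat.mul_div_cancel' hkm]; push_cast; rfl
        simp only [this]
        push_cast 
        rfl
      · simp
    rw [Finset.sum_congr rfl h1, Finset.sum_comm]
    apply Finset.sum_congr rfl
    intro k hk
    apply dil_sum (fun j : ℕ => (-1) ^ j * (2 * ((d / k : ℕ) : ℝ)) * (aSum G n (d / k) j : ℝ) *
          ((k : ℝ) * j) ^ (2 * g - 2)) N k d (Nat.pos_of_mem_divisors hk) (Nat.divisor_le hk)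
    intro j hj
    simp [aSum_zero G n (d / k) j ((hN' k hk).trans hj.le)]
  rw [hB, ← Nat.sum_div_divisors d (fun m => ∑ h ∈ Finset.range (G m + 1),
        cCoeff h g * (n h m : ℝ) * ((d / m : ℕ) : ℝ) ^ (2 * g - 3)),
    ← Nat.sum_div_divisors d (fun m => (n 0 m : ℝ) * ((d / m : ℕ) : ℝ) ^ (2 * g - 3)),
    Finset.mul_sum, Finset.mul_sum, ← Finset.sum_add_distrib]
  apply Finset.sum_congr rfl
  intro k hk
  have hkd := Nat.dvd_of_mem_divisors hk
  have hdk : d / (d / k) = k := Nat.div_div_self hkd (by omega)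
  have hd0 : (d : ℝ) ≠ 0 := by positivity
  have hmul : ((d / k : ℕ) : ℝ) * k = d := by
    rw [← Nat.cast_mul, Nat.div_mul_cancel hkd]
  simp only [hdk]
  rw [← Finset.sum_mul, c_sum G n g _ N (hN' k hk), add_mul, mul_assoc (fCS g)]
  congr 1
  rw [mul_assoc, mul_assoc ((-1) ^ (g - 1) / _)]
  congr 1
  rw [Finset.sum_mul, Finset.mul_sum]
  apply Finset.sum_congr rfl
  intro j _
  have hp : (k : ℝ) ^ (2 * g - 2) = k ^ (2 * g - 3) * k := by
    rw [← pow_succ]; congr 1; omega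
  rw [mul_pow, hp]
  generalize ((d / k : ℕ) : ℝ) = x at hmul
  rw [← hmul] at hd0 ⊢
  have hx : x ≠ 0 := left_ne_zero_of_mul hd0
  have hk0 : (k : ℝ) ≠ 0 := right_ne_zero_of_mul hd0
  field_simp
end

section
/- Fix a real number $t > 0$. For integers $g \ge 2$ define the genus-$g$ free energy of the resolved conifold $F_g(t) := f_g^{CS} \sum_{d=1}^{\infty} d^{2g-3} e^{-dt}$ (the series converges). Then $\lim_{g \to \infty} \; F_g(t) \cdot \dfrac{\pi\, (2\pi t)^{2g-1}}{t\, \Gamma(2g-1)} \;=\; 1$; that is, $F_g(t) \sim \frac{\Gamma(2g-1)}{(2\pi t)^{2g-1}} \cdot \frac{t}{\pi}$ as $g \to \infty$, exhibiting the instanton action $A = 2\pi t$. -/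
open Real Filter Topology

theorem aux_dom {𝕜 ι : Type*} [NontriviallyNormedField 𝕜] [CompleteSpace 𝕜] [DecidableEq ι]
    (a : ι → 𝕜) (i0 : ι)
    (h0 : a i0 = 1) (h1 : ∀ i, i ≠ i0 → ‖a i‖ < 1) (hs : Summable fun i => ‖a i‖ ^ 2)
    (p : ℕ → ℕ) (hp : Tendsto p atTop atTop) :
    Tendsto (fun g => ∑' i, a i ^ p g) atTop (𝓝 1) := by
  have hle : ∀ i, ‖a i‖ ≤ 1 := by
    intro i
    by_cases h : i = i0
    · subst h; simp [h0]
    · exact (h1 i h).le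
  have key := tendsto_tsum_of_dominated_convergence (𝓕 := atTop) (f := fun g i => a i ^ p g)
    (g := fun i => if i = i0 then (1 : 𝕜) else 0) hs ?_ ?_
  · simpa using key
  · intro i
    by_cases h : i = i0
    · subst h; simp [h0]
    · simp only [h, if_false]
      exact (tendsto_pow_atTop_nhds_zero_of_norm_lt_one (h1 i h)).comp hp
  · filter_upwards [hp.eventually_ge_atTop 2] with g hg i
    rw [norm_pow]
    exact pow_le_pow_of_le_one (norm_nonneg _) (hle i) hg

theorem aux_zeta : Tendsto (fun g : ℕ => ∑' n : ℕ, (1 / (n : ℝ)) ^ (2 * g)) atTop (𝓝 1) := by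
  refine aux_dom (fun n : ℕ => 1 / (n : ℝ)) 1 (by simp) ?_ ?_ _
    (tendsto_atTop_mono (fun g => by omega : ∀ g : ℕ, g ≤ 2 * g) tendsto_id)
  · intro i hi
    rcases Nat.eq_zero_or_pos i with h | h
    · subst h; simp
    · have : (1 : ℝ) < i := by exact_mod_cast (by omega : 1 < i)
      rw [Real.norm_of_nonneg (by positivity), div_lt_one (by linarith)]
      exact this
  · refine (Real.summable_one_div_nat_pow.mpr (by norm_num : 1 < 2)).congr fun n => ?_
    simp

theorem aux_summable (t : ℝ) (ht : 0 < t) (k : ℕ) :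
    Summable (fun d : ℕ => (d : ℝ) ^ k * Real.exp (-((d : ℝ) * t))) := by
  refine (summable_pow_mul_geometric_of_norm_lt_one k (r := Real.exp (-t)) ?_).congr fun d => ?_
  · rw [Real.norm_of_nonneg (Real.exp_nonneg _)]; simpa using ht
  · rw [← Real.exp_nat_mul]; congr 2; ring

theorem aux_shift (t : ℝ) (ht : 0 < t) (k : ℕ) (hk : 1 ≤ k) :
    ∑' d : ℕ, ((d : ℝ) + 1) ^ k * Real.exp (-(((d : ℝ) + 1) * t)) =
      ∑' d : ℕ, (d : ℝ) ^ k * Real.exp (-((d : ℝ) * t)) := by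
  rw [(aux_summable t ht k).tsum_eq_zero_add]
  simp [show k ≠ 0 by omega]

theorem aux_lip (t : ℝ) (ht : 0 < t) (z : UpperHalfPlane)
    (hz : (z : ℂ) = (t / (2 * π) : ℝ) * Complex.I) (k : ℕ) (hk : 1 ≤ k) :
    ∑' n : ℤ, ((z : ℂ) / ((z : ℂ) + n)) ^ (k + 1) =
      ((t ^ (k + 1) / (Nat.factorial k : ℝ) *
        ∑' d : ℕ, (d : ℝ) ^ k * Real.exp (-((d : ℝ) * t)) : ℝ) : ℂ) := by
  have h := EisensteinSeries.qExpansion_identity hk z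
  have hpi : (π : ℂ) ≠ 0 := by exact_mod_cast Real.pi_ne_zero
  have e1 : 2 * (π : ℂ) * Complex.I * z = ((-t : ℝ) : ℂ) := by
    rw [hz]; push_cast; field_simp; simp
  have e2 : (z : ℂ) * (-2 * (π : ℂ) * Complex.I) = t := by
    push_cast at e1
    linear_combination -e1
  simp_rw [div_pow, div_eq_mul_one_div ((z : ℂ) ^ (k + 1)), tsum_mul_left]
  rw [h, e1]
  push_cast
  rw [← mul_assoc, ← mul_div_assoc, ← mul_pow, e2]
  congr 1
  refine tsum_congr fun d => ?_
  rw [← Complex.exp_nat_mul]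
  congr 2
  ring

theorem aux_main (t : ℝ) (ht : 0 < t) :
    Tendsto (fun g : ℕ => t ^ (2 * g - 3 + 1) / (Nat.factorial (2 * g - 3) : ℝ) *
        ∑' d : ℕ, (d : ℝ) ^ (2 * g - 3) * Real.exp (-((d : ℝ) * t))) atTop (𝓝 1) := by
  have hpos : 0 < t / (2 * π) := by positivity
  let z : UpperHalfPlane := ⟨(t / (2 * π) : ℝ) * Complex.I, by
    rw [Complex.im_ofReal_mul, Complex.I_im, mul_one]; exact hpos⟩
  have hz : (z : ℂ) = (t / (2 * π) : ℝ) * Complex.I := rfl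
  have hz0 : (z : ℂ) ≠ 0 := UpperHalfPlane.ne_zero z
  have hp : Tendsto (fun g : ℕ => 2 * g - 3 + 1) atTop atTop :=
    tendsto_atTop_mono (fun g => by omega : ∀ g : ℕ, g - 2 ≤ 2 * g - 3 + 1)
      (tendsto_sub_atTop_nat 2)
  have := aux_dom (fun n : ℤ => (z : ℂ) / ((z : ℂ) + n)) 0 (by simp [hz0]) ?_ ?_ _ hp
  · have h2 := (Complex.continuous_re.tendsto _).comp this
    rw [Complex.one_re] at h2
    refine h2.congr' ?_
    filter_upwards [eventually_ge_atTop 2] with g hg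
    simp only [Function.comp]
    rw [aux_lip t ht z hz _ (by omega), Complex.ofReal_re]
  · intro n hn
    have h3 : (z : ℂ) + n ≠ 0 := by
      intro h
      have := congrArg Complex.im h
      simp at this
      exact z.im_pos.ne' this
    rw [norm_div, div_lt_one (norm_pos_iff.mpr h3)]
    refine lt_of_pow_lt_pow_left₀ 2 (norm_nonneg _) ?_
    rw [← Complex.normSq_eq_norm_sq, ← Complex.normSq_eq_norm_sq, hz]
    have : (0 : ℝ) < (n : ℝ) * n := by
      have : (n : ℝ) ≠ 0 := by exact_mod_cast hn
      exact mul_self_pos.mpr this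
    generalize t / (2 * π) = r
    simp only [Complex.normSq_apply, Complex.add_re, Complex.add_im, Complex.re_ofReal_mul,
      Complex.im_ofReal_mul, Complex.I_re, Complex.I_im, Complex.intCast_re, Complex.intCast_im]
    linarith
  · have := (EisensteinSeries.linear_right_summable (z : ℂ) 1 (k := 2) (by norm_num)).norm
    refine (this.mul_left (‖(z : ℂ)‖ ^ 2)).congr fun n => ?_
    simp [div_eq_mul_inv, mul_pow]

theorem conifold_free_energy_growth (t : ℝ) (ht : 0 < t) :
    (∀ g : ℕ, 2 ≤ g →
      Summable (fun d : ℕ => ((d : ℝ) + 1) ^ (2 * g - 3) * Real.exp (-(((d : ℝ) + 1) * t)))) ∧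
    Tendsto
      (fun g : ℕ =>
        (fCS g * ∑' d : ℕ, ((d : ℝ) + 1) ^ (2 * g - 3) * Real.exp (-(((d : ℝ) + 1) * t))) *
          (Real.pi * (2 * Real.pi * t) ^ (2 * g - 1)) / (t * Real.Gamma (2 * (g : ℝ) - 1)))
      atTop (𝓝 1) := by
  constructor
  · intro g hg
    have := (summable_nat_add_iff 1).mpr (aux_summable t ht (2 * g - 3))
    simpa using this
  · have hr : Tendsto (fun g : ℕ => 1 + (1 / 2 : ℝ) * (1 / ((g - 1 : ℕ) : ℝ))) atTop (𝓝 1) := by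
      have h1 := (tendsto_one_div_atTop_nhds_zero_nat (𝕜 := ℝ)).comp (tendsto_sub_atTop_nat 1)
      simpa using (h1.const_mul (1 / 2 : ℝ)).const_add 1
    have := (aux_zeta.mul hr).mul (aux_main t ht)
    rw [one_mul, one_mul] at this
    refine this.congr' ?_
    filter_upwards [eventually_ge_atTop 2] with g hg
    rw [aux_shift t ht _ (by omega)]
    have hze := (hasSum_zeta_nat (k := g) (by omega)).tsum_eq
    simp_rw [one_div_pow]
    rw [hze]
    generalize (∑' d : ℕ, (d : ℝ) ^ (2 * g - 3) * Real.exp (-((d : ℝ) * t))) = S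
    obtain ⟨m, rfl⟩ : ∃ m, g = m + 2 := ⟨g - 2, by omega⟩
    have hG : Real.Gamma (2 * ((m + 2 : ℕ) : ℝ) - 1) = Nat.factorial (2 * m + 2) := by
      rw [← Real.Gamma_nat_eq_factorial]; congr 1; push_cast; ring
    rw [hG, fCS]
    generalize ((bernoulli (2 * (m + 2)) : ℚ) : ℝ) = B
    rw [show 2 * (m + 2) - 3 = 2 * m + 1 by omega, show 2 * (m + 2) - 2 = 2 * m + 2 by omega,
      show 2 * (m + 2) - 1 = 2 * m + 3 by omega, show m + 2 - 1 = m + 1 by omega,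
      show 2 * (m + 2) = 2 * m + 1 + 1 + 1 + 1 by omega,
      show 2 * m + 2 = 2 * m + 1 + 1 by omega]
    simp only [Nat.factorial_succ (2 * m + 1 + 1 + 1), Nat.factorial_succ (2 * m + 1 + 1),
      Nat.factorial_succ (2 * m + 1)]
    have hf : (Nat.factorial (2 * m + 1) : ℝ) ≠ 0 := by positivity
    generalize hF : (Nat.factorial (2 * m + 1) : ℝ) = F at *
    push_cast
    rw [hF]
    have h1 : (m : ℝ) + 1 ≠ 0 := by positivity
    have h2 : (m : ℝ) + 2 ≠ 0 := by positivity
    have h3 : 2 * (m : ℝ) + 1 + 1 ≠ 0 := by positivity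
    have h4 : 2 * (m : ℝ) + 1 + 1 + 1 ≠ 0 := by positivity
    have h5 : 2 * (m : ℝ) + 1 + 1 + 1 + 1 ≠ 0 := by positivity
    field_simp
    ring
end

section
/- Fix real numbers $t > 0$ and $q$. For integers $g \ge 2$ set $d_g := \tfrac{2(g - q)}{t}$ (so that $g = \tfrac{t}{2} d_g + q$). Then $\lim_{g \to \infty} \; f_g^{CS}\, d_g^{2g-3}\, e^{-t\, d_g} \cdot \frac{(2\pi t)^{2g - 3/2}}{\Gamma\!\left(2g - \tfrac{3}{2}\right)} \cdot \frac{2 \pi^2}{t^{3/2}} \;=\; 1$; that is, along the K\"ahler diagonal the weighted Gromov–Witten invariants of the resolved conifold grow like $\frac{\Gamma(2g - 3/2)}{(2\pi t)^{2g-3/2}} \cdot \frac{t^{3/2}}{2\pi^2}$, with instanton action $A = 2\pi t$. -/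
open Real Filter Topology

lemma zeta_lim : Tendsto (fun k : ℕ => ∑' n : ℕ, 1 / (n : ℝ) ^ (2 * (k + 2))) atTop (𝓝 1) := by
  have h := tendsto_tsum_of_dominated_convergence (𝓕 := atTop)
    (f := fun (k : ℕ) (n : ℕ) => 1 / (n : ℝ) ^ (2 * (k + 2)))
    (g := fun n => if n = 1 then (1:ℝ) else 0) (bound := fun n : ℕ => 1 / (n : ℝ) ^ 2)
    (Real.summable_one_div_nat_pow.mpr (by norm_num)) ?_ ?_
  · simpa using h
  · intro n
    rcases Nat.lt_or_ge n 2 with hn | hn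
    · interval_cases n <;> simp
    · rw [if_neg (by omega)]
      have hn' : (2:ℝ) ≤ n := by exact_mod_cast hn
      have h1 : Tendsto (fun m : ℕ => (1 / (n : ℝ)) ^ m) atTop (𝓝 0) :=
        tendsto_pow_atTop_nhds_zero_of_lt_one (by positivity)
          (by rw [div_lt_one (by linarith)]; linarith)
      have h2 : Tendsto (fun k : ℕ => 2 * (k + 2)) atTop atTop :=
        tendsto_atTop_mono (fun k => by simp only [id]; omega) tendsto_id
      have h3 := h1.comp h2
      simpa [Function.comp_def] using h3
  · refine Eventually.of_forall fun k n => ?_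
    rcases Nat.eq_zero_or_pos n with rfl | hn
    · simp
    · have hn' : (1:ℝ) ≤ n := by exact_mod_cast hn
      rw [Real.norm_of_nonneg (by positivity)]
      exact one_div_le_one_div_of_le (by positivity) (pow_le_pow_right₀ hn' (by omega))

lemma Gamma_prod (m : ℕ) : Real.Gamma ((m : ℝ) + 3 / 2) =
    Real.Gamma (1 / 2) * ∏ j ∈ Finset.range (m + 1), ((1 / 2 : ℝ) + j) := by
  induction m with
  | zero =>
    rw [show ((0 : ℕ) : ℝ) + 3 / 2 = 1 / 2 + 1 by norm_num, Real.Gamma_add_one (by norm_num)]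
    simp; ring
  | succ m ih =>
    rw [Finset.prod_range_succ, ← mul_assoc, ← ih,
      show ((m + 1 : ℕ) : ℝ) + 3 / 2 = (m + 3 / 2) + 1 by push_cast; ring,
      Real.Gamma_add_one (by positivity)]
    push_cast; ring

lemma Gamma_formula (m : ℕ) (hm : 0 < m) : Real.Gamma ((m : ℝ) + 3 / 2) =
    Real.Gamma (1 / 2) / Real.GammaSeq (1 / 2) m * Stirling.stirlingSeq m * √2 * m * (m : ℝ) ^ m *
      Real.exp (-m) := by
  have hm' : (0:ℝ) < m := by exact_mod_cast hm
  have hP : 0 < ∏ j ∈ Finset.range (m + 1), ((1 / 2 : ℝ) + j) :=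
    Finset.prod_pos fun j _ => by positivity
  have hs : √(m:ℝ) * √m = m := Real.mul_self_sqrt hm'.le
  have he : Real.exp (-m) = (Real.exp 1 ^ m)⁻¹ := by
    rw [Real.exp_neg, ← Real.exp_nat_mul]; simp
  have hf : (0:ℝ) < (m.factorial : ℝ) := by exact_mod_cast m.factorial_pos
  rw [Gamma_prod, Real.GammaSeq, Stirling.stirlingSeq, ← Real.sqrt_eq_rpow, he,
    Real.sqrt_mul (by norm_num)]
  have h2 : 0 < √(m:ℝ) := Real.sqrt_pos.mpr hm'
  set P := ∏ j ∈ Finset.range (m + 1), ((1 / 2 : ℝ) + j)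
  set s := √(m:ℝ)
  rw [div_pow]
  field_simp
  rw [pow_two, hs]

lemma fCS_formula (k : ℕ) : fCS (k + 2) =
    2 * (∑' n : ℕ, 1 / (n : ℝ) ^ (2 * (k + 2))) * (2 * k + 3) / (2 * π) ^ (2 * k + 4) := by
  rw [(hasSum_zeta_nat (k := k + 2) (by omega)).tsum_eq, fCS]
  have hf : (((2 * (k + 2)).factorial : ℕ) : ℝ)
      = (2 * k + 4) * (2 * k + 3) * ((2 * k + 2).factorial : ℝ) := by
    rw [show 2 * (k + 2) = (2 * k + 2) + 1 + 1 by ring, Nat.factorial_succ, Nat.factorial_succ]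
    push_cast; ring
  have hf0 : ((2 * k + 2).factorial : ℝ) ≠ 0 := by positivity
  rw [hf, show 2 * (k + 2) - 2 = 2 * k + 2 by omega, show k + 2 - 1 = k + 1 by omega,
    show 2 * (k + 2) - 1 = 2 * k + 3 by omega, show 2 * (k + 2) = 2 * k + 4 by ring]
  have : (2 * (k:ℝ) + 4) ≠ 0 := by positivity
  have : (2 * (k:ℝ) + 3) ≠ 0 := by positivity
  push_cast
  rw [mul_pow, show 2 * (k:ℝ) + 4 = 2 * (k + 2) by ring]
  field_simp
  ring

theorem conifold_kahler_diagonal (t q : ℝ) (ht : 0 < t) :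
    Tendsto
      (fun g : ℕ =>
        fCS g * (2 * ((g : ℝ) - q) / t) ^ (2 * g - 3) *
            Real.exp (-t * (2 * ((g : ℝ) - q) / t)) *
          ((2 * Real.pi * t) ^ (2 * (g : ℝ) - 3 / 2) / Real.Gamma (2 * (g : ℝ) - 3 / 2)) *
          (2 * Real.pi ^ 2 / t ^ ((3 : ℝ) / 2)))
      atTop (𝓝 1) := by
  rw [← tendsto_add_atTop_iff_nat 2]
  have hm : Tendsto (fun k : ℕ => 2 * k + 1) atTop atTop :=
    tendsto_atTop_mono (fun k => by simp only [id]; omega) tendsto_id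
  have hG : Real.Gamma (1 / 2) ≠ 0 := (Real.Gamma_pos_of_pos (by norm_num)).ne'
  have hR := ((tendsto_const_nhds (x := Real.Gamma (1 / 2))).div (Real.GammaSeq_tendsto_Gamma (1 / 2)) hG).comp hm
  rw [div_self hG] at hR
  have hS := Stirling.tendsto_stirlingSeq_sqrt_pi.comp hm
  have hE := (Real.tendsto_one_add_div_pow_exp (3 - 2 * q)).comp hm
  have hL : Tendsto (fun k : ℕ => 1 + 2 / ((2 * k + 1 : ℕ) : ℝ)) atTop (𝓝 (1 + 0)) :=
    ((tendsto_const_div_atTop_nhds_zero_nat (2:ℝ)).comp hm).const_add 1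
  have hpi : √π ≠ 0 := (Real.sqrt_pos.mpr Real.pi_pos).ne'
  have key := (((zeta_lim.mul hL).mul hE).mul_const
    (Real.exp (-(3 - 2 * q)) * (4 * π ^ 2 / (2 * π * √(2 * π) * √2)))).div (hR.mul hS)
    (by simpa using hpi)
  have hval : 1 * (1 + 0) * Real.exp (3 - 2 * q) *
      (Real.exp (-(3 - 2 * q)) * (4 * π ^ 2 / (2 * π * √(2 * π) * √2))) / (1 * √π) = 1 := by
    have h2 : √2 * √2 = (2:ℝ) := Real.mul_self_sqrt (by norm_num)
    have h3 : √π * √π = π := Real.mul_self_sqrt Real.pi_pos.le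
    rw [Real.exp_neg, Real.sqrt_mul (by norm_num)]
    have := Real.exp_pos (3 - 2 * q)
    have := Real.pi_pos
    field_simp
    rw [pow_two, pow_two, h2, h3]; ring
  rw [hval] at key
  refine key.congr fun k => ?_
  have hmp : (0:ℝ) < ((2 * k + 1 : ℕ) : ℝ) := by positivity
  have hΓ : 2 * ((k + 2 : ℕ) : ℝ) - 3 / 2 = ((2 * k + 1 : ℕ) : ℝ) + 3 / 2 := by push_cast; ring
  have hgs : Real.GammaSeq (1 / 2) (2 * k + 1) ≠ 0 := by
    intro h
    have h1 := Gamma_formula (2 * k + 1) (by omega)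
    rw [h] at h1
    have h2 : 0 < Real.Gamma (((2 * k + 1 : ℕ) : ℝ) + 3 / 2) := Real.Gamma_pos_of_pos (by positivity)
    simp at h1 h2
    linarith
  have hst : Stirling.stirlingSeq (2 * k + 1) ≠ 0 := (Stirling.stirlingSeq'_pos (2 * k)).ne'
  have hπt : 0 < 2 * π * t := by positivity
  have hpw : (2 * π * t) ^ (((2 * k + 1 : ℕ) : ℝ) + 3 / 2) =
      (2 * π) ^ (2 * k + 1) * t ^ (2 * k + 1) * (2 * π * √(2 * π)) * t ^ ((3:ℝ) / 2) := by
    rw [Real.rpow_add hπt, Real.rpow_natCast, mul_pow, Real.mul_rpow (by positivity) ht.le,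
      show (3:ℝ) / 2 = 1 + 1 / 2 by norm_num, Real.rpow_add (x := 2 * π) (by positivity),
      Real.rpow_one, ← Real.sqrt_eq_rpow]
    ring
  have hex : Real.exp (-t * (2 * (((k + 2 : ℕ) : ℝ) - q) / t)) =
      Real.exp (-(3 - 2 * q)) * Real.exp (-((2 * k + 1 : ℕ) : ℝ)) := by
    rw [← Real.exp_add]; congr 1; push_cast; field_simp; ring
  have hb : 2 * (((k + 2 : ℕ) : ℝ) - q) / t =
      (1 + (3 - 2 * q) / ((2 * k + 1 : ℕ) : ℝ)) * ((2 * k + 1 : ℕ) : ℝ) / t := by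
    field_simp; push_cast; ring
  rw [hex, hΓ, hpw, Gamma_formula _ (by omega), fCS_formula, hb, div_pow, mul_pow (1 + (3 - 2 * q) / ((2 * k + 1 : ℕ) : ℝ)),
    show 2 * (k + 2) - 3 = 2 * k + 1 by omega,
    show (2 * π) ^ (2 * k + 4) = (2 * π) ^ (2 * k + 1) * (2 * π) ^ 3 by ring]
  simp only [Function.comp_apply, Pi.div_apply]
  have hl : (2 * (k:ℝ) + 3) = ((2 * k + 1 : ℕ) : ℝ) * (1 + 2 / ((2 * k + 1 : ℕ) : ℝ)) := by
    field_simp; push_cast; ring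
  rw [hl]
  have ht3 : 0 < t ^ ((3:ℝ) / 2) := by positivity
  have hsq : √(2 * π) * √(2 * π) = 2 * π := Real.mul_self_sqrt (by positivity)
  have hsp : 0 < √(2 * π) := by positivity
  have hπ := Real.pi_pos
  generalize (∑' n : ℕ, 1 / (n : ℝ) ^ (2 * (k + 2))) = Z
  generalize Real.GammaSeq (1 / 2) (2 * k + 1) = G at *
  generalize Stirling.stirlingSeq (2 * k + 1) = S at *
  generalize 1 + 2 / ((2 * k + 1 : ℕ) : ℝ) = L
  generalize (1 + (3 - 2 * q) / ((2 * k + 1 : ℕ) : ℝ)) ^ (2 * k + 1) = E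
  have hM : 0 < ((2 * k + 1 : ℕ) : ℝ) ^ (2 * k + 1) := by positivity
  generalize ((2 * k + 1 : ℕ) : ℝ) ^ (2 * k + 1) = M at *
  have he := Real.exp_pos (-((2 * k + 1 : ℕ) : ℝ))
  generalize Real.exp (-((2 * k + 1 : ℕ) : ℝ)) = X at *
  generalize ((2 * k + 1 : ℕ) : ℝ) = m at *
  generalize Real.exp (-(3 - 2 * q)) = Y
  have hT : 0 < t ^ (2 * k + 1) := by positivity
  generalize t ^ (2 * k + 1) = T at *
  have hU : 0 < (2 * π) ^ (2 * k + 1) := by positivity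
  generalize (2 * π) ^ (2 * k + 1) = U at *
  generalize t ^ ((3:ℝ) / 2) = V at *
  generalize √(2 * π) = r at *
  have hs2 : 0 < √(2:ℝ) := by positivity
  generalize √(2:ℝ) = w at *
  generalize Real.Gamma (1 / 2) = H at *
  field_simp
  try rw [pow_two r, hsq]
  try ring
end

section
/- There exists a sequence of polynomials $(\mathcal{P}_h)_{h \ge 0}$ with rational coefficients, with $\mathcal{P}_0 = 1$ and $\deg \mathcal{P}_h \le 2h$, such that for every real number $q$ and every integer $H \ge 0$, as $x \to +\infty$, $\sqrt{2\pi}\, e^{2q - x}\, (x-1)\, (x - 2q)^{x-3} \;-\; \sum_{h=0}^{H} \Gamma\!\left(x - \tfrac{3}{2} - h\right) 2^{-h}\, \mathcal{P}_h(q) \;=\; O\!\left(\Gamma\!\left(x - \tfrac{5}{2} - H\right)\right)$. -/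
open Real Filter Asymptotics Finset
open Polynomial

noncomputable def EvP (p : ℚ[X][X]) (q x : ℝ) : ℝ :=
  (p.map ((aeval q : ℚ[X] →ₐ[ℚ] ℝ) : ℚ[X] →+* ℝ)).eval x⁻¹

def WtP (m : ℕ) (p : ℚ[X][X]) : Prop := ∀ h, (p.coeff h).natDegree ≤ m * h

def BO (H : ℕ) (f : ℝ → ℝ → ℝ) : Prop :=
  ∀ q, (fun x => f q x) =O[atTop] fun x : ℝ => x⁻¹ ^ H

def AE (m : ℕ) (f : ℝ → ℝ → ℝ) : Prop :=
  ∀ H : ℕ, ∃ p, WtP m p ∧ BO H (fun q x => f q x - EvP p q x)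

lemma poly_bdd (p : ℝ[X]) : (fun x : ℝ => p.eval x⁻¹) =O[atTop] fun _ : ℝ => (1 : ℝ) := by
  have h : Tendsto (fun x : ℝ => p.eval x⁻¹) atTop (nhds (p.eval 0)) :=
    (p.continuous.tendsto 0).comp tendsto_inv_atTop_zero
  exact h.isBigO_one ℝ

lemma inv_pow_le (a b : ℕ) (h : a ≤ b) :
    (fun x : ℝ => x⁻¹ ^ b) =O[atTop] fun x : ℝ => x⁻¹ ^ a := by
  apply IsBigO.of_bound 1
  filter_upwards [eventually_ge_atTop 1] with x hx
  have h0 : 0 ≤ x⁻¹ := by positivity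
  rw [norm_of_nonneg (by positivity), norm_of_nonneg (by positivity), one_mul]
  exact pow_le_pow_of_le_one h0 (inv_le_one_of_one_le₀ hx) h

lemma BO.mono {a b f} (hf : BO b f) (h : a ≤ b) : BO a f := fun q => (hf q).trans (inv_pow_le a b h)
lemma BO.add {a f g} (hf : BO a f) (hg : BO a g) : BO a (fun q x => f q x + g q x) :=
  fun q => (hf q).add (hg q)
lemma BO.sub {a f g} (hf : BO a f) (hg : BO a g) : BO a (fun q x => f q x - g q x) :=
  fun q => (hf q).sub (hg q)
lemma BO.mul {a b f g} (hf : BO a f) (hg : BO b g) : BO (a+b) (fun q x => f q x * g q x) :=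
  fun q => by simpa only [pow_add] using (hf q).mul (hg q)
lemma BO.congr {a f g} (hf : BO a f) (h : ∀ q, ∀ᶠ x in atTop, f q x = g q x) : BO a g :=
  fun q => (hf q).congr' (h q) (EventuallyEq.rfl)
lemma BO.pow {f} (hf : BO 1 f) (n : ℕ) : BO n (fun q x => f q x ^ n) := fun q => by
  simpa using (hf q).pow n

lemma BO_ev (p) : BO 0 (EvP p) := fun q => by
  simp only [pow_zero]; exact poly_bdd _

lemma EvP_add (p r q x) : EvP (p + r) q x = EvP p q x + EvP r q x := by simp [EvP]
lemma EvP_mul (p r q x) : EvP (p * r) q x = EvP p q x * EvP r q x := by simp [EvP]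

lemma WtP.add {m p r} (hp : WtP m p) (hr : WtP m r) : WtP m (p + r) := fun h => by
  rw [coeff_add]; exact natDegree_add_le_of_degree_le (hp h) (hr h)
lemma WtP.mul {m p r} (hp : WtP m p) (hr : WtP m r) : WtP m (p * r) := fun h => by
  rw [coeff_mul]
  apply natDegree_sum_le_of_forall_le
  intro i hi
  rw [HasAntidiagonal.mem_antidiagonal] at hi
  refine natDegree_mul_le.trans ?_
  have := hp i.1
  have := hr i.2
  rw [← hi, mul_add]; omega

lemma AE.bdd {m f} (hf : AE m f) : BO 0 f := by
  obtain ⟨p, hp, h⟩ := hf 0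
  exact (h.add (BO_ev p)).congr (fun q => by simp)

lemma AE.congr {m f g} (hf : AE m f) (h : ∀ q, ∀ᶠ x in atTop, f q x = g q x) : AE m g := by
  intro H
  obtain ⟨p, hp, h'⟩ := hf H
  exact ⟨p, hp, h'.congr fun q => by filter_upwards [h q] with x hx; rw [hx]⟩

lemma AE.add {m f g} (hf : AE m f) (hg : AE m g) : AE m (fun q x => f q x + g q x) := by
  intro H
  obtain ⟨p, hp, h⟩ := hf H
  obtain ⟨r, hr, h'⟩ := hg H
  refine ⟨p + r, hp.add hr, (h.add h').congr fun q => Eventually.of_forall fun x => ?_⟩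
  rw [EvP_add]; ring

lemma AE.mul {m f g} (hf : AE m f) (hg : AE m g) : AE m (fun q x => f q x * g q x) := by
  intro H
  obtain ⟨p, hp, h⟩ := hf H
  obtain ⟨r, hr, h'⟩ := hg H
  refine ⟨p * r, hp.mul hr, ?_⟩
  have h1 := h.mul hg.bdd
  have h2 := (BO_ev p).mul h'
  rw [add_zero] at h1
  rw [zero_add] at h2
  refine (h1.add h2).congr fun q => Eventually.of_forall fun x => ?_
  rw [EvP_mul]; ring

lemma AE_mono_term (m h : ℕ) (c : ℚ[X]) (hc : c.natDegree ≤ m * h) :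
    AE m (fun q x => aeval q c * x⁻¹ ^ h) := by
  intro H
  refine ⟨monomial h c, ?_, fun q => ?_⟩
  · intro k
    rw [coeff_monomial]
    split_ifs with hk
    · rwa [← hk]
    · simp
  · simp [EvP, isBigO_zero]

lemma AE_const (m : ℕ) (c : ℚ) : AE m (fun _ _ => (c : ℝ)) :=
  (AE_mono_term m 0 (C c) (by simp)).congr fun q => Eventually.of_forall fun x => by simp

lemma AE_one (m : ℕ) : AE m (fun _ _ => (1 : ℝ)) := by simpa using AE_const m 1

lemma AE.neg {m f} (hf : AE m f) : AE m (fun q x => - f q x) :=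
  ((AE_const m (-1)).mul hf).congr fun q => Eventually.of_forall fun x => by simp

lemma AE.sub {m f g} (hf : AE m f) (hg : AE m g) : AE m (fun q x => f q x - g q x) := by
  simpa only [sub_eq_add_neg] using hf.add hg.neg

lemma AE.sum {m} (f : ℕ → ℝ → ℝ → ℝ) (s : Finset ℕ) (hf : ∀ i ∈ s, AE m (f i)) :
    AE m (fun q x => ∑ i ∈ s, f i q x) := by
  classical
  induction s using Finset.induction_on with
  | empty => simpa using AE_const m 0
  | insert a s ha ih =>
    simp only [Finset.sum_insert ha]
    exact (hf a (by simp)).add (ih fun i hi => hf i (by simp [hi]))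

lemma AE.pow {m f} (hf : AE m f) (n : ℕ) : AE m (fun q x => f q x ^ n) := by
  induction n with
  | zero => simpa using AE_one m
  | succ n ih => simpa only [pow_succ] using ih.mul hf

lemma AE.weaken {m m' f} (hf : AE m f) (h : m ≤ m') : AE m' f := fun H => by
  obtain ⟨p, hp, h'⟩ := hf H
  exact ⟨p, fun k => (hp k).trans (Nat.mul_le_mul_right k h), h'⟩

lemma AE_close {m f} (h : ∀ H, ∃ g, AE m g ∧ BO H (fun q x => f q x - g q x)) : AE m f := by
  intro H
  obtain ⟨g, hg, h1⟩ := h H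
  obtain ⟨p, hp, h2⟩ := hg H
  exact ⟨p, hp, (h1.add h2).congr fun q => Eventually.of_forall fun x => by ring⟩

lemma BO.tendsto {f} (hf : BO 1 f) (q : ℝ) : Tendsto (f q) atTop (nhds 0) := by
  refine (hf q).trans_tendsto ?_
  simpa using tendsto_inv_atTop_zero (𝕜 := ℝ)

lemma AE.exp {m f} (hf : AE m f) (h1 : BO 1 f) : AE m (fun q x => Real.exp (f q x)) := by
  apply AE_close
  intro H
  refine ⟨fun q x => ∑ k ∈ range H, f q x ^ k / (k.factorial : ℝ), ?_, ?_⟩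
  · apply AE.sum
    intro i _
    refine ((hf.pow i).mul (AE_const m (1 / i.factorial))).congr
      fun q => Eventually.of_forall fun x => ?_
    push_cast; ring
  · intro q
    refine IsBigO.trans ?_ (h1.pow H q)
    exact (Real.exp_sub_sum_range_isBigO_pow H).comp_tendsto (h1.tendsto q)

lemma exp_sub_one_BO {f} (h1 : BO 1 f) : BO 1 (fun q x => Real.exp (f q x) - 1) := by
  intro q
  refine IsBigO.trans ?_ (h1 q)
  simpa [Function.comp_def] using (Real.exp_sub_sum_range_isBigO_pow 1).comp_tendsto (h1.tendsto q)

lemma log_taylor (a : ℝ) (n : ℕ) :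
    (fun x : ℝ => Real.log (1 - a * x⁻¹) + ∑ k ∈ range n, (a * x⁻¹) ^ (k+1) / (k+1))
      =O[atTop] fun x : ℝ => x⁻¹ ^ (n+1) := by
  have ht : Tendsto (fun x : ℝ => a * x⁻¹) atTop (nhds 0) := by
    simpa using tendsto_inv_atTop_zero.const_mul a
  have h2 : (fun x : ℝ => (a * x⁻¹) ^ (n+1)) =O[atTop] fun x : ℝ => x⁻¹ ^ (n+1) := by
    simp only [mul_pow]
    exact isBigO_const_mul_self _ _ _
  refine IsBigO.trans ?_ h2
  apply IsBigO.of_bound 2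
  have hb : ∀ᶠ x : ℝ in atTop, |a * x⁻¹| < 1/2 := by
    have := ht.abs
    simp only [abs_zero] at this
    exact this.eventually (gt_mem_nhds (by norm_num))
  filter_upwards [hb] with x hx
  have := Real.abs_log_sub_add_sum_range_le (x := a * x⁻¹) (by linarith) n
  rw [add_comm, norm_eq_abs, norm_eq_abs, abs_pow]
  refine this.trans ?_
  rw [div_le_iff₀ (by linarith)]
  have : 0 ≤ |a * x⁻¹| ^ (n+1) := by positivity
  nlinarith

lemma AE_log {m : ℕ} (a : ℚ[X]) (ha : a.natDegree ≤ m) :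
    AE m (fun q x => Real.log (1 - aeval q a * x⁻¹)) := by
  apply AE_close
  intro H
  refine ⟨fun q x => - ∑ k ∈ range H, (aeval q a * x⁻¹) ^ (k+1) / (k+1), ?_, ?_⟩
  · apply AE.neg
    apply AE.sum
    intro k _
    refine ((AE_const m (1 / (k+1))).mul (AE_mono_term m (k+1) (a^(k+1)) ?_)).congr
      fun q => Eventually.of_forall fun x => ?_
    · refine natDegree_pow_le.trans ?_
      rw [mul_comm]; gcongr
    · push_cast; rw [map_pow]; ring
  · have : BO (H+1) _ := fun q => log_taylor (aeval q a) H
    exact (this.mono (Nat.le_succ H)).congr fun q => Eventually.of_forall fun x => by ring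

lemma BO_log (a : ℚ[X]) : BO 1 (fun q x => Real.log (1 - aeval q a * x⁻¹)) := fun q => by
  simpa using log_taylor (aeval q a) 0

lemma xlog_taylor (a : ℝ) (n : ℕ) :
    (fun x : ℝ => x * Real.log (1 - a * x⁻¹) + a +
      ∑ k ∈ range n, a ^ (k+2) / (k+2) * x⁻¹ ^ (k+1))
      =O[atTop] fun x : ℝ => x⁻¹ ^ (n+1) := by
  have h := (isBigO_refl (fun x : ℝ => x) atTop).mul (log_taylor a (n+1))
  refine h.congr' ?_ ?_
  · filter_upwards [eventually_gt_atTop 0] with x hx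
    have hxx : x * x⁻¹ = 1 := mul_inv_cancel₀ hx.ne'
    rw [sum_range_succ', mul_add, mul_add, Finset.mul_sum, add_assoc, add_right_inj, add_comm]
    congr 1
    · push_cast
      linear_combination (norm := (push_cast; ring)) a * hxx
    · apply Finset.sum_congr rfl
      intro k _
      push_cast
      have hk : (k:ℝ) + 2 ≠ 0 := by positivity
      have hk' : (k:ℝ) + 1 + 1 ≠ 0 := by positivity
      rw [show (k:ℝ) + 1 + 1 = k + 2 by ring]
      linear_combination a ^ (k+2) / (k+2) * x⁻¹ ^ (k+1) * hxx
  · filter_upwards [eventually_gt_atTop 0] with x hx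
    have hxx : x * x⁻¹ = 1 := mul_inv_cancel₀ hx.ne'
    linear_combination x⁻¹ ^ (n+1) * hxx

lemma AE_xlog {m : ℕ} (a : ℚ[X]) (ha : 2 * a.natDegree ≤ m) :
    AE m (fun q x => x * Real.log (1 - aeval q a * x⁻¹) + aeval q a) := by
  apply AE_close
  intro H
  refine ⟨fun q x => - ∑ k ∈ range H, (aeval q a) ^ (k+2) / (k+2) * x⁻¹ ^ (k+1), ?_, ?_⟩
  · apply AE.neg
    apply AE.sum
    intro k _
    refine ((AE_const m (1 / (k+2))).mul (AE_mono_term m (k+1) (a^(k+2)) ?_)).congr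
      fun q => Eventually.of_forall fun x => ?_
    · refine natDegree_pow_le.trans ?_
      nlinarith [Nat.zero_le (k * a.natDegree), Nat.mul_le_mul_right (k+1) ha]
    · push_cast; rw [map_pow]; ring
  · have : BO (H+1) _ := fun q => xlog_taylor (aeval q a) H
    exact (this.mono (Nat.le_succ H)).congr fun q => Eventually.of_forall fun x => by ring

lemma BO_xlog (a : ℚ[X]) : BO 1 (fun q x => x * Real.log (1 - aeval q a * x⁻¹) + aeval q a) :=
  fun q => by simpa using xlog_taylor (aeval q a) 0

lemma poly_lead (N : ℕ) : ∀ p : ℝ[X],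
    ((fun x : ℝ => p.eval x⁻¹) =O[atTop] fun x : ℝ => x⁻¹ ^ N) →
    ((fun x : ℝ => p.eval x⁻¹ - p.coeff N * x⁻¹ ^ N) =O[atTop] fun x : ℝ => x⁻¹ ^ (N+1)) := by
  induction N with
  | zero =>
    intro p _
    have h := (poly_bdd p.divX).mul (isBigO_refl (fun x : ℝ => x⁻¹) atTop)
    refine h.congr ?_ (by simp)
    intro x
    conv_rhs => rw [← divX_mul_X_add p]
    simp
  | succ N ih =>
    intro p hp
    have h0 : p.coeff 0 = 0 := by
      have h : Tendsto (fun x : ℝ => p.eval x⁻¹) atTop (nhds (p.eval 0)) :=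
        (p.continuous.tendsto 0).comp tendsto_inv_atTop_zero
      have h2 : Tendsto (fun x : ℝ => p.eval x⁻¹) atTop (nhds 0) := by
        refine hp.trans_tendsto ?_
        simpa using (tendsto_inv_atTop_zero (𝕜 := ℝ)).pow (N+1)
      rw [coeff_zero_eq_eval_zero]
      exact tendsto_nhds_unique h h2
    have he : ∀ x : ℝ, p.eval x⁻¹ = p.divX.eval x⁻¹ * x⁻¹ := by
      intro x
      conv_lhs => rw [← divX_mul_X_add p]
      simp [h0]
    have h1 := ih p.divX (by
      have := hp.mul (isBigO_refl (fun x : ℝ => x) atTop)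
      refine this.congr' ?_ ?_
      · filter_upwards [eventually_gt_atTop 0] with x hx
        rw [he]; field_simp
      · filter_upwards [eventually_gt_atTop 0] with x hx
        have hxx : x * x⁻¹ = 1 := mul_inv_cancel₀ hx.ne'
        linear_combination x⁻¹ ^ N * hxx)
    refine (h1.mul (isBigO_refl (fun x : ℝ => x⁻¹) atTop)).congr ?_ ?_
    · intro x; rw [he, coeff_divX]; ring
    · intro x; ring

lemma AE.lead {m f} (hf : AE m f) (N : ℕ) (h : BO N f) : ∃ c : ℚ[X], c.natDegree ≤ m * N ∧
    BO (N+1) (fun q x => f q x - aeval q c * x⁻¹ ^ N) := by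
  obtain ⟨p, hp, h1⟩ := hf (N+1)
  refine ⟨p.coeff N, hp N, ?_⟩
  have h2 : BO N (EvP p) := (h.sub (h1.mono (Nat.le_succ N))).congr
    fun q => Eventually.of_forall fun x => by ring
  have h3 : BO (N+1) _ := fun q => poly_lead N _ (h2 q)
  refine (h1.add h3).congr fun q => Eventually.of_forall fun x => ?_
  simp [EvP]

/-- expansions with leading term one and no dependence on the parameter -/
def A1 (k : ℝ → ℝ) : Prop := AE 0 (fun _ x => k x) ∧ BO 1 (fun _ x => k x - 1)

lemma A1.mul {k l} (hk : A1 k) (hl : A1 l) : A1 (fun x => k x * l x) := by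
  refine ⟨hk.1.mul hl.1, ?_⟩
  have h1 := hk.2.mul hl.1.bdd
  rw [add_zero] at h1
  exact (h1.add hl.2).congr fun q => Eventually.of_forall fun x => by ring

lemma A1_inv (a : ℚ) : A1 (fun x => (1 - a * x⁻¹)⁻¹) := by
  have hA : AE 0 (fun q x => Real.log (1 - aeval q (C a) * x⁻¹)) := AE_log (C a) (by simp)
  have hB := BO_log (C a)
  have e : ∀ᶠ x : ℝ in atTop, Real.exp (-Real.log (1 - a * x⁻¹)) = (1 - a * x⁻¹)⁻¹ := by
    have ht : Tendsto (fun x : ℝ => 1 - a * x⁻¹) atTop (nhds 1) := by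
      simpa using (tendsto_inv_atTop_zero.const_mul (a:ℝ)).const_sub 1
    filter_upwards [ht.eventually (lt_mem_nhds (zero_lt_one))] with x hx
    rw [Real.exp_neg, Real.exp_log hx]
  have hB' : BO 1 (fun q x => -Real.log (1 - aeval q (C a) * x⁻¹)) := fun q => (hB q).neg_left
  constructor
  · refine (hA.neg.exp hB').congr fun q => ?_
    simpa using e
  · refine (exp_sub_one_BO hB').congr fun q => ?_
    filter_upwards [e] with x hx
    simp [← hx]

lemma A1_prod (a : ℕ → ℚ) (n : ℕ) : A1 (fun x => ∏ j ∈ range n, (1 - a j * x⁻¹)⁻¹) := by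
  induction n with
  | zero => exact ⟨by simpa using AE_one 0, fun q => by simp [isBigO_zero]⟩
  | succ n ih => simpa only [prod_range_succ] using ih.mul (A1_inv (a n))

lemma A1.tendsto {k} (hk : A1 k) : Tendsto k atTop (nhds 1) := by
  simpa using (hk.2.tendsto 0).add_const 1

lemma expansion {m f} (s : ℕ) (hf : AE m f) (hs : BO s f) (k : ℕ → ℝ → ℝ) (hk : ∀ n, A1 (k n)) :
    ∃ P : ℕ → ℚ[X], (∀ n, (P n).natDegree ≤ m * (n + s)) ∧ ∀ H,
      BO (H + s) (fun q x => f q x - ∑ n ∈ range H, aeval q (P n) * (x⁻¹ ^ (n+s) * k n x)) := by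
  have key : ∀ (n : ℕ) (g : ℝ → ℝ → ℝ), ∃ c : ℚ[X], c.natDegree ≤ m * (n+s) ∧
      (AE m g ∧ BO (n+s) g → AE m (fun q x => g q x - aeval q c * (x⁻¹ ^ (n+s) * k n x)) ∧
        BO (n+1+s) (fun q x => g q x - aeval q c * (x⁻¹ ^ (n+s) * k n x))) := by
    intro n g
    by_cases hg : AE m g ∧ BO (n+s) g
    · obtain ⟨c, hc, h⟩ := hg.1.lead (n+s) hg.2
      refine ⟨c, hc, fun _ => ⟨?_, ?_⟩⟩
      · refine hg.1.sub ?_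
        refine ((AE_mono_term m (n+s) c hc).mul ((hk n).1.weaken (Nat.zero_le m))).congr
          fun q => Eventually.of_forall fun x => by ring
      · have h2 := (AE_mono_term m (n+s) c hc)
        have h3 : BO (n+s) (fun q x => aeval q c * x⁻¹ ^ (n+s)) :=
          fun q => isBigO_const_mul_self _ _ _
        have h4 := h.sub (h3.mul (hk n).2)
        rw [show n+1+s = n+s+1 by ring]
        exact h4.congr fun q => Eventually.of_forall fun x => by ring
    · exact ⟨0, by simp, fun h => absurd h hg⟩
  choose c hc hstep using key
  let F : ℕ → ℝ → ℝ → ℝ := fun n => Nat.rec f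
    (fun n g => fun q x => g q x - aeval q (c n g) * (x⁻¹ ^ (n+s) * k n x)) n
  have hF : ∀ n, AE m (F n) ∧ BO (n+s) (F n) := by
    intro n
    induction n with
    | zero => exact ⟨hf, by rw [zero_add]; exact hs⟩
    | succ n ih => exact hstep n (F n) ih
  refine ⟨fun n => c n (F n), fun n => hc n _, fun H => ?_⟩
  have : ∀ q x, F H q x = f q x -
      ∑ n ∈ range H, aeval q (c n (F n)) * (x⁻¹ ^ (n+s) * k n x) := by
    intro q x
    induction H with
    | zero => simp [F]
    | succ n ih =>
      rw [sum_range_succ, ← sub_sub, ← ih]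
  exact (hF H).2.congr fun q => Eventually.of_forall fun x => this q x

noncomputable def bb (k : ℕ) (x : ℝ) : ℝ := ∏ j ∈ range k, (x + j)⁻¹

lemma bb_diff (k : ℕ) (x : ℝ) (hx : 0 < x) : bb k x - bb k (x + 1) = k * bb (k+1) x := by
  have h1 : bb (k+1) x = bb k x * (x + k)⁻¹ := by simp only [bb, prod_range_succ]
  have h2 : bb (k+1) x = bb k (x+1) * x⁻¹ := by
    simp only [bb, prod_range_succ', Nat.cast_zero, add_zero]
    congr 1
    apply prod_congr rfl
    intro j _
    push_cast; ring
  have h3 : bb k x = (x + k) * bb (k+1) x := by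
    rw [h1]; have : x + k ≠ 0 := by positivity
    field_simp
  have h4 : bb k (x+1) = x * bb (k+1) x := by
    rw [h2]; field_simp
  rw [h3, h4]; ring

noncomputable def kk (k : ℕ) (x : ℝ) : ℝ :=
  ∏ j ∈ range k, (1 - ((-j : ℚ) : ℝ) * x⁻¹)⁻¹

lemma kk_A1 (k : ℕ) : A1 (kk k) := A1_prod (fun j => (-j : ℚ)) k

lemma bb_eq (k : ℕ) (x : ℝ) (hx : 0 < x) : bb k x = x⁻¹ ^ k * kk k x := by
  have : x⁻¹ ^ k = ∏ j ∈ range k, x⁻¹ := by simp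
  rw [this, bb, kk, ← prod_mul_distrib]
  apply prod_congr rfl
  intro j _
  rw [← mul_inv]
  congr 1
  push_cast
  field_simp
  ring

lemma bb_nonneg (k : ℕ) (x : ℝ) (hx : 0 < x) : 0 ≤ bb k x := by
  unfold bb; exact prod_nonneg fun j _ => by positivity

lemma bb_le (k : ℕ) (x : ℝ) (hx : 0 < x) : bb k x ≤ x⁻¹ ^ k := by
  have : x⁻¹ ^ k = ∏ j ∈ range k, x⁻¹ := by simp
  rw [this, bb]
  apply Finset.prod_le_prod
  · intro j _; positivity
  · intro j _
    gcongr
    simp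

lemma telescope (E : ℝ → ℝ) (N : ℕ) (hN : 1 ≤ N)
    (hE : (fun x => E x - E (x+1)) =O[atTop] fun x : ℝ => x⁻¹ ^ (N+1))
    (hlim : ∀ᶠ x in atTop, Tendsto (fun n : ℕ => E (x + n)) atTop (nhds 0)) :
    E =O[atTop] fun x : ℝ => x⁻¹ ^ N := by
  obtain ⟨C, hC, hb⟩ := hE.exists_pos
  rw [IsBigOWith] at hb
  have hk := (kk_A1 (N+1)).tendsto.eventually (lt_mem_nhds (show (1/2:ℝ) < 1 by norm_num))
  obtain ⟨X, hX⟩ := eventually_atTop.1 (hb.and (hk.and (eventually_gt_atTop 0)))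
  have hNr : (0:ℝ) < N := by exact_mod_cast hN
  have hd : ∀ y, X ≤ y → |E y - E (y+1)| ≤ (2 * C / N) * (bb N y - bb N (y+1)) := by
    intro y hy
    obtain ⟨h1, h2, h3⟩ := hX y hy
    rw [bb_diff N y h3, bb_eq _ y h3]
    have hp : 0 < y⁻¹ ^ (N+1) := by positivity
    rw [norm_eq_abs, norm_of_nonneg hp.le] at h1
    refine h1.trans ?_
    have : 2 * C / N * (N * (y⁻¹ ^ (N+1) * kk (N+1) y)) = C * y⁻¹ ^ (N+1) * (2 * kk (N+1) y) := by
      field_simp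
    rw [this]
    have : 0 < C * y⁻¹ ^ (N+1) := by positivity
    nlinarith
  have hs : ∀ y, X ≤ y → ∀ n : ℕ, |E y - E (y+n)| ≤ (2 * C / N) * (bb N y - bb N (y+n)) := by
    intro y hy n
    induction n with
    | zero => simp
    | succ n ih =>
      have h1 := hd (y+n) (by have : (0:ℝ) ≤ n := by positivity
                              linarith)
      have h2 := abs_add_le (E y - E (y+n)) (E (y+n) - E (y+n+1))
      push_cast
      rw [← add_assoc]
      rw [show E y - E (y+n+1) = (E y - E (y+n)) + (E (y+n) - E (y+n+1)) by ring]
      calc _ ≤ _ := h2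
        _ ≤ _ := add_le_add ih h1
        _ = _ := by ring
  apply IsBigO.of_bound (2 * C / N)
  filter_upwards [hlim, eventually_ge_atTop X, eventually_gt_atTop 0] with x hx hxX hx0
  have ht : Tendsto (fun n : ℕ => |E x - E (x + n)|) atTop (nhds |E x|) := by
    simpa using (hx.const_sub (E x)).abs
  have hle : |E x| ≤ (2 * C / N) * bb N x := by
    refine le_of_tendsto ht (Eventually.of_forall fun n => (hs x hxX n).trans ?_)
    gcongr
    have := bb_nonneg N (x+n) (by positivity)
    linarith
  rw [norm_eq_abs, norm_of_nonneg (by positivity)]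
  refine hle.trans ?_
  gcongr
  exact bb_le N x hx0

noncomputable def Lf (x : ℝ) : ℝ :=
  Real.log (Real.sqrt (2 * Real.pi)) - x + Real.log (x - 1) + (x - 3) * Real.log x
    - Real.log (Real.Gamma (x - 3/2))

lemma log_Gamma_add_nat (s : ℝ) (hs : 0 < s) (n : ℕ) :
    Real.log (Real.Gamma (s + n)) =
      Real.log (Real.Gamma s) + ∑ m ∈ range n, Real.log (s + m) := by
  induction n with
  | zero => simp
  | succ n ih =>
    have h : 0 < s + n := by positivity
    rw [sum_range_succ, ← add_assoc, ← ih]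
    push_cast
    rw [← add_assoc, Real.Gamma_add_one h.ne', Real.log_mul h.ne' (Real.Gamma_pos_of_pos h).ne']
    ring

lemma log_split (y c : ℝ) (hy : 0 < y) (h : 0 < y + c) :
    Real.log (y + c) = Real.log y + Real.log (1 - (-c) * y⁻¹) := by
  have : y + c = y * (1 - (-c) * y⁻¹) := by field_simp; ring
  have h2 : 0 < 1 - (-c) * y⁻¹ := by
    by_contra h3
    push Not at h3
    nlinarith
  conv_lhs => rw [this]
  rw [Real.log_mul hy.ne' h2.ne']

lemma Lf_tendsto (x : ℝ) (hx : 3/2 < x) : Tendsto (fun n : ℕ => Lf (x + n)) atTop (nhds 0) := by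
  rw [← tendsto_add_atTop_iff_nat 1]
  obtain ⟨s, rfl⟩ : ∃ s, x = s + 3/2 := ⟨x - 3/2, by ring⟩
  have hs : 0 < s := by linarith
  have h1 := Real.BohrMollerup.tendsto_log_gamma hs
  have h2 : Tendsto (fun n => Real.log (Stirling.stirlingSeq n)) atTop
      (nhds (Real.log (Real.sqrt Real.pi))) :=
    Stirling.tendsto_stirlingSeq_sqrt_pi.log (by positivity)
  have hc := tendsto_natCast_atTop_atTop (R := ℝ)
  have hl : ∀ c : ℝ, Tendsto (fun n : ℕ => Real.log (1 - (-c) * (n:ℝ)⁻¹)) atTop (nhds 0) := by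
    intro c
    have := (log_taylor (-c) 0).trans_tendsto (by simpa using tendsto_inv_atTop_zero (𝕜 := ℝ))
    simpa [Function.comp_def] using this.comp hc
  have hxl : ∀ c : ℝ, Tendsto (fun n : ℕ => (n:ℝ) * Real.log (1 - (-c) * (n:ℝ)⁻¹) + (-c))
      atTop (nhds 0) := by
    intro c
    have := (xlog_taylor (-c) 0).trans_tendsto (by simpa using tendsto_inv_atTop_zero (𝕜 := ℝ))
    simpa [Function.comp_def] using this.comp hc
  have key := ((((h1.sub_const (Real.log (Real.Gamma s))).add (hl (s+3/2))).add
    ((hl (s+5/2)).const_mul (s-1/2))).add (hxl (s+5/2))).sub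
    (h2.sub_const (Real.log (Real.sqrt Real.pi)))
  simp only [sub_self, add_zero, mul_zero] at key
  refine key.congr' ?_
  filter_upwards [eventually_gt_atTop 0] with n hn
  have hn' : (0:ℝ) < n := by exact_mod_cast hn
  have e1 := log_Gamma_add_nat s hs (n+1)
  have e2 := log_split n (s+3/2) hn' (by positivity)
  have e3 := log_split n (s+5/2) hn' (by positivity)
  have e4 := Stirling.log_stirlingSeq_formula n
  rw [Real.log_div hn'.ne' (Real.exp_pos 1).ne', Real.log_exp,
    Real.log_mul two_ne_zero hn'.ne'] at e4
  have e5 : Real.log (Real.sqrt (2 * Real.pi)) =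
      1/2 * Real.log 2 + Real.log (Real.sqrt Real.pi) := by
    rw [Real.sqrt_mul (by norm_num), Real.log_mul (by positivity) (by positivity),
      Real.log_sqrt (by norm_num)]
    ring
  rw [Lf, Real.BohrMollerup.logGammaSeq]
  rw [show s + 3/2 + ((n+1 : ℕ):ℝ) - 1 = n + (s+3/2) by push_cast; ring,
    show s + 3/2 + ((n+1 : ℕ):ℝ) - 3/2 = s + ((n+1 : ℕ):ℝ) by push_cast; ring,
    show s + 3/2 + ((n+1 : ℕ):ℝ) = n + (s+5/2) by push_cast; ring, e1, e2, e3, e4, e5]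
  ring

lemma Lf_diff (x : ℝ) (hx : 2 < x) : Lf x - Lf (x+1) =
    Real.log (1 - 1 * x⁻¹) + Real.log (1 - (3/2) * x⁻¹) + 2 * Real.log (1 - (-1) * x⁻¹)
     - (x * Real.log (1 - (-1) * x⁻¹) + (-1)) := by
  have hx0 : 0 < x := by linarith
  have e1 := log_split x (-1) hx0 (by linarith)
  have e2 := log_split x (-(3/2)) hx0 (by linarith)
  have e3 := log_split x 1 hx0 (by linarith)
  have h : 0 < x - 3/2 := by linarith
  have e4 : Real.log (Real.Gamma (x + 1 - 3/2)) =
      Real.log (x - 3/2) + Real.log (Real.Gamma (x - 3/2)) := by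
    rw [show x + 1 - 3/2 = x - 3/2 + 1 by ring, Real.Gamma_add_one h.ne',
      Real.log_mul h.ne' (Real.Gamma_pos_of_pos h).ne']
  rw [neg_neg, ← sub_eq_add_neg] at e1 e2
  rw [Lf, Lf, e4, show x + 1 - 1 = x by ring, e1, e2, e3]
  ring

lemma Lf_AE : AE 0 (fun _ x => Lf x) ∧ BO 1 (fun _ x => Lf x) := by
  have hlog : ∀ a : ℚ, AE 0 (fun _ x => Real.log (1 - a * x⁻¹)) := fun a => by
    simpa using AE_log (m := 0) (C a) (by simp)
  have hxlog : ∀ a : ℚ, AE 0 (fun _ x => x * Real.log (1 - a * x⁻¹) + a) := fun a => by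
    simpa using AE_xlog (m := 0) (C a) (by simp)
  have hD : AE 0 (fun _ x => Lf x - Lf (x+1)) := by
    refine ((((hlog 1).add (hlog (3/2))).add ((AE_const 0 2).mul (hlog (-1)))).sub
      (hxlog (-1))).congr fun q => ?_
    filter_upwards [eventually_gt_atTop 2] with x hx
    rw [Lf_diff x hx]
    push_cast
    ring
  have hD2 : BO 2 (fun _ x => Lf x - Lf (x+1)) := by
    intro q
    have := (((log_taylor 1 1).add (log_taylor (3/2) 1)).add
      ((log_taylor (-1) 1).const_mul_left 2)).sub (xlog_taylor (-1) 1)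
    refine this.congr' ?_ EventuallyEq.rfl
    filter_upwards [eventually_gt_atTop 2] with x hx
    rw [Lf_diff x hx]
    simp
    ring
  obtain ⟨P, hP, hH⟩ := expansion 2 hD hD2 (fun n => kk (n+2)) (fun n => kk_A1 _)
  have main : ∀ H, BO (H+1) (fun q x => Lf x -
      ∑ n ∈ range H, aeval q (P n) * (1 / (n+1)) * bb (n+1) x) := by
    intro H q
    apply telescope _ (H+1) (by omega)
    · refine (hH H q).congr' ?_ EventuallyEq.rfl
      filter_upwards [eventually_gt_atTop 0] with x hx
      rw [sub_sub_sub_comm, ← sum_sub_distrib]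
      congr 1
      apply sum_congr rfl
      intro n _
      rw [← mul_sub, bb_diff _ x hx, ← bb_eq _ x hx]
      have : (n:ℝ) + 1 ≠ 0 := by positivity
      push_cast
      field_simp
    · filter_upwards [eventually_gt_atTop (3/2)] with x hx
      have h1 := Lf_tendsto x hx
      have h2 : ∀ k : ℕ, Tendsto (fun n : ℕ => bb (k+1) (x+n)) atTop (nhds 0) := by
        intro k
        have h3 : Tendsto (fun n : ℕ => (x + n)⁻¹ ^ (k+1)) atTop (nhds 0) := by
          have : Tendsto (fun n : ℕ => x + (n:ℝ)) atTop atTop :=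
            tendsto_atTop_add_const_left _ _ tendsto_natCast_atTop_atTop
          simpa using (tendsto_inv_atTop_zero.comp this).pow (k+1)
        refine squeeze_zero (fun n => bb_nonneg _ _ ?_) (fun n => bb_le _ _ ?_) h3 <;> positivity
      have h4 := h1.sub (tendsto_finsetSum (range H)
        fun n _ => (h2 n).const_mul (aeval q (P n) * (1 / ((n:ℝ)+1))))
      simpa using h4
  refine ⟨?_, by simpa using main 0⟩
  apply AE_close
  intro H
  refine ⟨_, ?_, (main H).mono (Nat.le_succ H)⟩
  apply AE.sum
  intro n _
  have h1 := ((AE_mono_term 0 0 (P n) (by simpa using hP n)).mul (AE_const 0 (1/(n+1))))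
  have h2 := (AE_mono_term 0 (n+1) 1 (by simp)).mul (kk_A1 (n+1)).1
  refine (h1.mul h2).congr fun q => ?_
  filter_upwards [eventually_gt_atTop 0] with x hx
  rw [bb_eq _ x hx]
  simp

lemma Gamma_shift (h : ℕ) (x : ℝ) (hx : (h:ℝ) + 5 < x) :
    Real.Gamma (x - 3/2 - h) = Real.Gamma (x - 3/2) *
      (x⁻¹ ^ (h + 0) * ∏ j ∈ range h, (1 - ((5/2 + j : ℚ):ℝ) * x⁻¹)⁻¹) := by
  induction h with
  | zero => simp
  | succ h ih =>
    push_cast at hx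
    have hh : (0:ℝ) ≤ h := by positivity
    rw [prod_range_succ]
    have h1 : 0 < x - 5/2 - h := by linarith
    have e : Real.Gamma (x - 3/2 - h) = (x - 5/2 - h) * Real.Gamma (x - 3/2 - (h+1:ℕ)) := by
      push_cast
      rw [show x - 3/2 - (h:ℝ) = (x - 5/2 - h) + 1 by ring, Real.Gamma_add_one h1.ne']
      congr 2; ring
    have e2 : Real.Gamma (x - 3/2 - (h+1:ℕ)) = Real.Gamma (x - 3/2 - h) * (x - 5/2 - h)⁻¹ := by
      rw [e, mul_comm, ← mul_assoc, inv_mul_cancel₀ h1.ne', one_mul]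
    have hx0 : 0 < x := by linarith
    have e3 : (x - 5/2 - h)⁻¹ = x⁻¹ * (1 - ((5/2 + h : ℚ):ℝ) * x⁻¹)⁻¹ := by
      rw [← mul_inv]; congr 1; push_cast; field_simp; ring
    rw [e2, ih (by linarith), e3]
    ring

theorem diagonal_asymptotic_polynomials :
    ∃ P : ℕ → Polynomial ℚ, P 0 = 1 ∧ (∀ h : ℕ, (P h).degree ≤ (2 * h : ℕ)) ∧
      ∀ (q : ℝ) (H : ℕ),
        (fun x : ℝ =>
            Real.sqrt (2 * Real.pi) * Real.exp (2 * q - x) * (x - 1) *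
                (x - 2 * q) ^ (x - 3) -
              ∑ h ∈ Finset.range (H + 1),
                Real.Gamma (x - 3 / 2 - h) * (2 : ℝ) ^ (-(h : ℝ)) *
                  Polynomial.aeval q (P h))
          =O[atTop] fun x : ℝ => Real.Gamma (x - 5 / 2 - H) := by
  have hdeg : (C 2 * X : ℚ[X]).natDegree ≤ 1 := (natDegree_C_mul_le _ _).trans natDegree_X_le
  have hl := (AE_log (m := 2) (C 2 * X) (by omega))
  have hl1 := BO_log (C 2 * X)
  have hx := (AE_xlog (m := 2) (C 2 * X) (by omega))
  have hx1 := BO_xlog (C 2 * X)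
  have hg := ((Lf_AE.1.weaken (Nat.zero_le 2)).add hx).sub ((AE_const 2 3).mul hl)
  have hg1 := (Lf_AE.2.add hx1).sub (fun q => (hl1 q).const_mul_left 3 :
    BO 1 (fun q x => 3 * Real.log (1 - aeval q (C 2 * X : ℚ[X]) * x⁻¹)))
  simp only [map_mul, aeval_C, aeval_X, eq_ratCast, Rat.cast_ofNat] at hg hg1
  have hf := hg.exp hg1
  have hf1 := exp_sub_one_BO hg1
  set f : ℝ → ℝ → ℝ := fun q x => Real.exp (Lf x + (x * Real.log (1 - 2 * q * x⁻¹) + 2 * q)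
    - 3 * Real.log (1 - 2 * q * x⁻¹)) with hfdef
  have hk := fun n => A1_prod (fun j => (5/2 + j : ℚ)) n
  obtain ⟨P, hP, hH⟩ := expansion 0 hf hf.bdd
    (fun n x => ∏ j ∈ range n, (1 - ((5/2 + j : ℚ):ℝ) * x⁻¹)⁻¹) hk
  have hfe : ∀ q, ∀ᶠ x in atTop, Real.sqrt (2 * Real.pi) * Real.exp (2 * q - x) * (x - 1) *
                (x - 2 * q) ^ (x - 3) = Real.Gamma (x - 3/2) * f q x := by
    intro q
    filter_upwards [eventually_gt_atTop 2, eventually_gt_atTop (2*q)] with x hx hxq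
    have hx0 : 0 < x := by linarith
    have hG : 0 < Real.Gamma (x - 3/2) := Real.Gamma_pos_of_pos (by linarith)
    have e := log_split x (-(2*q)) hx0 (by linarith)
    rw [neg_neg, ← sub_eq_add_neg] at e
    have h1 : 0 < x - 1 := by linarith
    have h2 : 0 < x - 2 * q := by linarith
    have h3 : 0 < Real.sqrt (2 * Real.pi) := by positivity
    rw [Real.rpow_def_of_pos h2]
    conv_lhs => rw [← Real.exp_log h3, ← Real.exp_log h1]
    rw [← Real.exp_log hG, ← Real.exp_add, ← Real.exp_add, ← Real.exp_add, hfdef]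
    simp only
    rw [← Real.exp_add, e, Lf]
    congr 1
    ring
  refine ⟨fun h => C ((2:ℚ)^h) * P h, ?_, ?_, ?_⟩
  · have h0 : ∀ q : ℝ, aeval q (P 0) = (1:ℝ) := by
      intro q
      have h1 := (hH 1)
      have h2 := (hf1.sub h1).tendsto q
      have h3 := h2.congr (f₂ := fun _ => aeval q (P 0) - 1) (fun x => by
        simp [hfdef])
      have := tendsto_nhds_unique h3 tendsto_const_nhds
      linarith
    simp only [pow_zero, C_1, one_mul]
    apply Polynomial.funext
    intro r
    have := h0 (r:ℝ)
    rw [show ((r:ℝ)) = algebraMap ℚ ℝ r by simp, aeval_algebraMap_apply] at this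
    simp only [eq_ratCast] at this
    rw [eval_one]
    exact_mod_cast this
  · intro h
    refine degree_le_of_natDegree_le ((natDegree_C_mul_le _ _).trans ?_)
    simpa using hP h
  · intro q H
    have h1 := (isBigO_refl (fun x : ℝ => Real.Gamma (x - 3/2)) atTop).mul (hH (H+1) q)
    have h2 : (fun x : ℝ => Real.Gamma (x - 3/2) * x⁻¹ ^ (H+1+0)) =O[atTop]
        fun x : ℝ => Real.Gamma (x - 5/2 - H) := by
      apply IsBigO.of_bound 2
      filter_upwards [eventually_gt_atTop (((H+1:ℕ):ℝ) + 5),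
        (hk (H+1)).tendsto.eventually (lt_mem_nhds (show (1/2:ℝ) < 1 by norm_num))] with x hx hk2
      have hH0 : (0:ℝ) ≤ H := by positivity
      rw [show x - 5/2 - (H:ℝ) = x - 3/2 - ((H+1:ℕ):ℝ) by push_cast; ring, Gamma_shift _ x hx]
      push_cast at hx
      have hx0 : 0 < x := by linarith
      have hG : 0 < Real.Gamma (x - 3/2) := Real.Gamma_pos_of_pos (by linarith)
      rw [← mul_assoc, norm_mul (Real.Gamma (x - 3/2) * _), norm_eq_abs (∏ j ∈ _, _)]
      have := le_abs_self (∏ j ∈ range (H+1), (1 - ((5/2 + j : ℚ):ℝ) * x⁻¹)⁻¹)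
      have h5 := norm_nonneg (Real.Gamma (x - 3/2) * x⁻¹ ^ (H+1+0))
      nlinarith
    refine (h1.trans h2).congr' ?_ EventuallyEq.rfl
    filter_upwards [hfe q, eventually_gt_atTop ((H:ℝ) + 5)] with x hx hxH
    rw [hx, mul_sub, Finset.mul_sum]
    congr 1
    apply sum_congr rfl
    intro h hh
    rw [Finset.mem_range] at hh
    have : (h:ℝ) ≤ H := by exact_mod_cast (by omega : h ≤ H)
    rw [Gamma_shift h x (by linarith), Real.rpow_neg (by norm_num), Real.rpow_natCast]
    simp only [map_mul, aeval_C, map_pow, eq_ratCast, Rat.cast_ofNat]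
    field_simp
end

section
/- For every fixed real number $q$, $\lim_{x \to +\infty} \dfrac{\sqrt{2\pi}\, e^{2q - x}\, (x-1)\, (x - 2q)^{x-3} \;-\; \Gamma\!\left(x - \tfrac{3}{2}\right)}{\Gamma\!\left(x - \tfrac{5}{2}\right)} \;=\; \frac{1}{2}\left(-\frac{71}{12} + 12 q - 4 q^2\right)$. (This identifies the polynomial $\mathcal{P}_1(q) = -\tfrac{71}{12} + 12q - 4q^2$ in the diagonal asymptotic expansion.) -/
open Real Filter Topology

namespace DiagAux

/-- Stirling remainder. -/
noncomputable def g (y : ℝ) : ℝ :=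
  log (Gamma y) - ((y - 1 / 2) * log y - y + 1 / 2 * log (2 * π))

lemma d_hasSum {y : ℝ} (hy : 0 < y) :
    HasSum (fun k : ℕ => 1 / (2 * (k : ℝ) + 1) * ((1 / (2 * y + 1)) ^ 2) ^ k)
      ((y + 1 / 2) * log (1 + y⁻¹)) := by
  have h := (hasSum_log_one_add_inv hy).mul_left (y + 1 / 2)
  suffices e : (fun k : ℕ => 1 / (2 * (k : ℝ) + 1) * ((1 / (2 * y + 1)) ^ 2) ^ k) = fun k : ℕ =>
      (y + 1 / 2) * (2 * (1 / (2 * (k : ℝ) + 1)) * (1 / (2 * y + 1)) ^ (2 * k + 1)) by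
    rw [e]; exact h
  funext k
  rw [← pow_mul, pow_succ]
  have : 2 * y + 1 ≠ 0 := by positivity
  field_simp

lemma d_lower {y : ℝ} (hy : 0 < y) :
    1 / 12 * (1 / (y + 1 / 2)) - 1 / 12 * (1 / (y + 1 + 1 / 2)) ≤
      (y + 1 / 2) * log (1 + y⁻¹) - 1 := by
  have h := sum_le_hasSum (Finset.range 2) (fun i _ => by positivity) (d_hasSum hy)
  simp only [Finset.sum_range_succ, Finset.sum_range_zero] at h
  norm_num at h
  have h2 : 1 / 12 * (1 / (y + 1 / 2)) - 1 / 12 * (1 / (y + 1 + 1 / 2)) ≤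
      1 / 3 * ((2 * y + 1) ^ 2)⁻¹ := by
    rw [← sub_nonneg]
    have : 1 / 3 * ((2 * y + 1) ^ 2)⁻¹ - (1 / 12 * (1 / (y + 1 / 2)) - 1 / 12 * (1 / (y + 1 + 1 / 2)))
      = 2 / (3 * (2 * y + 1) ^ 2 * (2 * y + 3)) := by
      field_simp
      ring
    rw [this]; positivity
  norm_num at h2 ⊢
  linarith

lemma d_upper {y : ℝ} (hy : 0 < y) :
    (y + 1 / 2) * log (1 + y⁻¹) - 1 ≤ 1 / 12 * (1 / y) - 1 / 12 * (1 / (y + 1)) := by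
  have h := (hasSum_nat_add_iff' 1).mpr (d_hasSum hy)
  have ht : (1 / (2 * y + 1)) ^ 2 < 1 := by
    have : 1 / (2 * y + 1) < 1 := by
      rw [div_lt_one (by positivity)]; linarith
    have h0 : 0 < 1 / (2 * y + 1) := by positivity
    nlinarith
  have hg := ((hasSum_geometric_of_lt_one (by positivity) ht).mul_left
    (1 / 3 * (1 / (2 * y + 1)) ^ 2))
  have := hasSum_le (fun k => ?_) h hg
  · refine (le_of_eq ?_).trans (this.trans (le_of_eq ?_))
    · simp
    · have h1 : 1 - (1 / (2 * y + 1)) ^ 2 = 4 * y * (y + 1) / (2 * y + 1) ^ 2 := by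
        field_simp; ring
      rw [h1]; field_simp; ring
  · rw [pow_succ', ← mul_assoc]
    gcongr
    push_cast
    have : (0 : ℝ) ≤ k := by positivity
    linarith

lemma g_sub {y : ℝ} (hy : 0 < y) : g y - g (y + 1) = (y + 1 / 2) * log (1 + y⁻¹) - 1 := by
  have : log (1 + y⁻¹) = log (y + 1) - log y := by
    rw [← log_div (by positivity) (by positivity)]
    congr 1
    field_simp
  unfold g
  rw [this, Gamma_add_one hy.ne', log_mul hy.ne' (Gamma_pos_of_pos hy).ne']
  ring

lemma log_Gamma_add {x : ℝ} (hx : 0 < x) (n : ℕ) :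
    log (Gamma (x + n)) = log (Gamma x) + ∑ m ∈ Finset.range n, log (x + m) := by
  refine BohrMollerup.f_add_nat_eq (f := fun y => log (Gamma y)) (fun {y} hy => ?_) hx n
  show log (Gamma (y + 1)) = log (Gamma y) + log y
  rw [Gamma_add_one hy.ne', log_mul hy.ne' (Gamma_pos_of_pos hy).ne', add_comm]

lemma tendsto_log_one_add_div (t : ℝ) : Tendsto (fun x : ℝ => log (1 + t / x)) atTop (𝓝 0) := by
  have h1 : Tendsto (fun x : ℝ => 1 + t / x) atTop (𝓝 1) := by
    simpa using (tendsto_const_nhds (x := (1:ℝ))).add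
      ((tendsto_const_nhds (x := t)).div_atTop tendsto_id)
  simpa using h1.log one_ne_zero

lemma g_tendsto_nat {y : ℝ} (hy : 0 < y) : Tendsto (fun n : ℕ => g (y + n)) atTop (𝓝 0) := by
  rw [← tendsto_add_atTop_iff_nat 1]
  have h1 := BohrMollerup.tendsto_log_gamma hy
  have h2 : Tendsto (fun n : ℕ => log (Stirling.stirlingSeq n)) atTop (𝓝 (log (√π))) :=
    Stirling.tendsto_stirlingSeq_sqrt_pi.log (by positivity)
  have h3 := (tendsto_mul_log_one_add_div_atTop (y + 1)).comp (tendsto_natCast_atTop_atTop (R := ℝ))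
  have h4 := (tendsto_log_one_add_div (y + 1)).comp (tendsto_natCast_atTop_atTop (R := ℝ))
  have h5 := (((h2.sub h1).sub h3).sub (h4.const_mul (y + 1 / 2))).add_const
    (log (Gamma y) + y + 1 + 1 / 2 * log 2 - 1 / 2 * log (2 * π))
  have e : log (√π) - log (Gamma y) - (y + 1) - (y + 1 / 2) * 0 +
      (log (Gamma y) + y + 1 + 1 / 2 * log 2 - 1 / 2 * log (2 * π)) = 0 := by
    rw [log_mul two_ne_zero pi_pos.ne', log_sqrt pi_pos.le]; ring
  rw [e] at h5
  refine h5.congr' ?_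
  filter_upwards [eventually_gt_atTop 0] with n hn
  have hn' : (0 : ℝ) < n := by exact_mod_cast hn
  simp only [Function.comp]
  unfold g
  rw [log_Gamma_add hy, Stirling.log_stirlingSeq_formula, BohrMollerup.logGammaSeq,
    log_div hn'.ne' (exp_pos 1).ne', log_exp, log_mul two_ne_zero hn'.ne']
  have : log (1 + (y + 1) / n) = log (y + (n + 1 : ℕ)) - log n := by
    rw [← log_div (by positivity) (by positivity)]
    congr 1
    push_cast
    field_simp
    ring
  rw [this]
  push_cast
  ring

lemma g_lower {y : ℝ} (hy : 0 < y) : 1 / 12 * (1 / (y + 1 / 2)) ≤ g y := by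
  have ha : Antitone (fun n : ℕ => g (y + n) - 1 / 12 * (1 / (y + n + 1 / 2))) := by
    refine antitone_nat_of_succ_le fun n => ?_
    have hp : 0 < y + n := by positivity
    have h1 := d_lower hp
    have h2 := g_sub hp
    push_cast
    rw [← add_assoc]
    linarith
  have ht : Tendsto (fun n : ℕ => g (y + n) - 1 / 12 * (1 / (y + n + 1 / 2))) atTop (𝓝 0) := by
    have : Tendsto (fun n : ℕ => y + (n : ℝ) + 1 / 2) atTop atTop :=
      tendsto_atTop_add_const_right _ _ (tendsto_atTop_add_const_left _ _ tendsto_natCast_atTop_atTop)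
    have h := (g_tendsto_nat hy).sub
      (((tendsto_const_nhds (x := (1:ℝ))).div_atTop this).const_mul (1 / 12))
    rw [mul_zero, sub_zero] at h
    exact h
  have := ha.le_of_tendsto ht 0
  simp only [Nat.cast_zero, add_zero] at this
  linarith

lemma g_upper {y : ℝ} (hy : 0 < y) : g y ≤ 1 / 12 * (1 / y) := by
  have ha : Monotone (fun n : ℕ => g (y + n) - 1 / 12 * (1 / (y + n))) := by
    refine monotone_nat_of_le_succ fun n => ?_
    have hp : 0 < y + n := by positivity
    have h1 := d_upper hp
    have h2 := g_sub hp
    push_cast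
    rw [← add_assoc]
    linarith
  have ht : Tendsto (fun n : ℕ => g (y + n) - 1 / 12 * (1 / (y + n))) atTop (𝓝 0) := by
    have : Tendsto (fun n : ℕ => y + (n : ℝ)) atTop atTop :=
      tendsto_atTop_add_const_left _ _ tendsto_natCast_atTop_atTop
    have h := (g_tendsto_nat hy).sub
      (((tendsto_const_nhds (x := (1:ℝ))).div_atTop this).const_mul (1 / 12))
    rw [mul_zero, sub_zero] at h
    exact h
  have := ha.ge_of_tendsto ht 0
  simp only [Nat.cast_zero, add_zero] at this
  linarith

lemma tendsto_div_sub (a : ℝ) : Tendsto (fun x : ℝ => x / (x - a)) atTop (𝓝 1) := by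
  have h : Tendsto (fun x : ℝ => 1 + a / (x - a)) atTop (𝓝 (1 + 0)) :=
    tendsto_const_nhds.add (tendsto_const_nhds.div_atTop
      (tendsto_atTop_add_const_right _ (-a) tendsto_id))
  rw [add_zero] at h
  refine h.congr' ?_
  filter_upwards [eventually_gt_atTop a] with x hx
  have : x - a ≠ 0 := by linarith
  field_simp
  ring

lemma x_g : Tendsto (fun x : ℝ => x * g (x - 3 / 2)) atTop (𝓝 (1 / 12)) := by
  have hl := (tendsto_div_sub 1).const_mul (1 / 12)
  have hu := (tendsto_div_sub (3 / 2)).const_mul (1 / 12)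
  rw [mul_one] at hl hu
  refine tendsto_of_tendsto_of_tendsto_of_le_of_le' hl hu ?_ ?_
  · filter_upwards [eventually_gt_atTop 2] with x hx
    have := mul_le_mul_of_nonneg_left (g_lower (y := x - 3 / 2) (by linarith)) (by linarith : 0 ≤ x)
    refine le_trans (le_of_eq ?_) this
    rw [show x - 3 / 2 + 1 / 2 = x - 1 by ring]
    ring
  · filter_upwards [eventually_gt_atTop 2] with x hx
    have := mul_le_mul_of_nonneg_left (g_upper (y := x - 3 / 2) (by linarith)) (by linarith : 0 ≤ x)
    refine le_trans this (le_of_eq ?_)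
    ring

lemma log1 (a : ℝ) : Tendsto (fun x : ℝ => x * log (1 - a / x)) atTop (𝓝 (-a)) := by
  refine (tendsto_mul_log_one_add_div_atTop (-a)).congr fun x => ?_
  rw [neg_div, sub_eq_add_neg]

lemma log2 (a : ℝ) :
    Tendsto (fun x : ℝ => x * (x * log (1 - a / x) + a)) atTop (𝓝 (-(a ^ 2 / 2))) := by
  rw [tendsto_iff_norm_sub_tendsto_zero]
  have hb : Tendsto (fun x : ℝ => |a| ^ 3 / (x - |a|)) atTop (𝓝 0) :=
    tendsto_const_nhds.div_atTop (tendsto_atTop_add_const_right _ (-|a|) tendsto_id)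
  refine squeeze_zero' (Eventually.of_forall fun _ => norm_nonneg _) ?_ hb
  filter_upwards [eventually_gt_atTop |a|] with x hx
  have hx0 : 0 < x := (abs_nonneg a).trans_lt hx
  have habs : |a / x| = |a| / x := by rw [abs_div, abs_of_pos hx0]
  have h := abs_log_sub_add_sum_range_le (x := a / x)
    (by rw [habs, div_lt_one hx0]; exact hx) 2
  rw [habs] at h
  simp only [Finset.sum_range_succ, Finset.sum_range_zero] at h
  norm_num at h
  rw [Real.norm_eq_abs]
  have e : x * (x * log (1 - a / x) + a) - -(a ^ 2 / 2) =
      x ^ 2 * (a / x + (a / x) ^ 2 / 2 + log (1 - a / x)) := by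
    field_simp
    ring
  rw [e, abs_mul, abs_of_pos (by positivity : 0 < x ^ 2)]
  refine (mul_le_mul_of_nonneg_left h (by positivity)).trans (le_of_eq ?_)
  have : x - |a| ≠ 0 := by linarith
  have h1 : 1 - |a| / x = (x - |a|) / x := by field_simp
  rw [h1]
  field_simp

lemma log_sub' {a x : ℝ} (hx : 0 < x) (hxa : a < x) : log (x - a) = log x + log (1 - a / x) := by
  have h : 1 - a / x = (x - a) / x := by field_simp
  rw [h, log_div (by linarith) hx.ne']
  ring

lemma exp_lim {u : ℝ → ℝ} {C : ℝ} (h : Tendsto (fun x => x * u x) atTop (𝓝 C)) :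
    Tendsto (fun x => (x - 5 / 2) * (exp (u x) - 1)) atTop (𝓝 C) := by
  have hu : Tendsto u atTop (𝓝 0) := by
    have := h.mul tendsto_inv_atTop_zero
    rw [mul_zero] at this
    refine this.congr' ?_
    filter_upwards [eventually_gt_atTop 0] with x hx
    field_simp
  have h1 : Tendsto (fun x => x * (exp (u x) - 1 - u x)) atTop (𝓝 0) := by
    have hb : Tendsto (fun x => |(x * u x) * u x|) atTop (𝓝 0) := by
      simpa using (h.mul hu).abs
    refine squeeze_zero_norm' ?_ hb
    have hs : ∀ᶠ x in atTop, |u x| < 1 := by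
      have := hu.abs
      rw [abs_zero] at this
      exact this.eventually_lt_const one_pos
    filter_upwards [hs] with x hx
    have := abs_exp_sub_one_sub_id_le hx.le
    rw [norm_mul, Real.norm_eq_abs, Real.norm_eq_abs, mul_assoc, abs_mul, ← pow_two,
      abs_of_nonneg (sq_nonneg (u x))]
    gcongr
  have h2 : Tendsto (fun x => exp (u x) - 1) atTop (𝓝 0) := by
    simpa using ((continuous_exp.tendsto 0).comp hu).sub_const 1
  have h3 := (h1.add h).sub (h2.const_mul (5 / 2))
  rw [zero_add, mul_zero, sub_zero] at h3
  refine h3.congr fun x => ?_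
  ring

end DiagAux

open DiagAux in
/-- the subleading diagonal asymptotics identify the polynomial
`𝒫_1(q) = -71/12 + 12q - 4q²`. -/
theorem diagonal_subleading_P1 (q : ℝ) :
    Tendsto
      (fun x : ℝ =>
        (Real.sqrt (2 * Real.pi) * Real.exp (2 * q - x) * (x - 1) * (x - 2 * q) ^ (x - 3) -
            Real.Gamma (x - 3 / 2)) /
          Real.Gamma (x - 5 / 2))
      atTop (𝓝 (1 / 2 * (-(71 / 12) + 12 * q - 4 * q ^ 2))) := by
  have key : Tendsto (fun x : ℝ => x * (2 * q - 3 / 2 + log (1 - 1 / x)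
      + (x - 3) * log (1 - (2 * q) / x) - (x - 2) * log (1 - (3 / 2) / x) - g (x - 3 / 2)))
      atTop (𝓝 (1 / 2 * (-(71 / 12) + 12 * q - 4 * q ^ 2))) := by
    have h := (((((log2 (2 * q)).sub (log2 (3 / 2))).add (log1 1)).sub
      ((log1 (2 * q)).const_mul 3)).add ((log1 (3 / 2)).const_mul 2)).sub x_g
    convert h using 1
    · ext x; ring
    · congr 1; ring
  refine (exp_lim key).congr' ?_
  filter_upwards [eventually_gt_atTop 3, eventually_gt_atTop (2 * q)] with x hx hq
  have hG : 0 < Gamma (x - 5 / 2) := Gamma_pos_of_pos (by linarith)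
  have hG' : 0 < Gamma (x - 3 / 2) := Gamma_pos_of_pos (by linarith)
  have hrec : Gamma (x - 3 / 2) = (x - 5 / 2) * Gamma (x - 5 / 2) := by
    rw [← Gamma_add_one (by linarith)]; congr 1; ring
  have hx0 : 0 < x := by linarith
  have hE : exp (2 * q - 3 / 2 + log (1 - 1 / x)
      + (x - 3) * log (1 - (2 * q) / x) - (x - 2) * log (1 - (3 / 2) / x) - g (x - 3 / 2)) *
      Gamma (x - 3 / 2) =
      √(2 * π) * exp (2 * q - x) * (x - 1) * (x - 2 * q) ^ (x - 3) := by
    have e1 : √(2 * π) = exp (1 / 2 * log (2 * π)) := by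
      rw [← exp_log (by positivity : 0 < √(2 * π)), log_sqrt (by positivity)]
      congr 1; ring
    have e2 : x - 1 = exp (log (x - 1)) := (exp_log (by linarith)).symm
    rw [rpow_def_of_pos (by linarith), e1]
    nth_rewrite 1 [e2]
    nth_rewrite 1 [← exp_log hG']
    rw [← exp_add, ← exp_add, ← exp_add, ← exp_add]
    congr 1
    unfold g
    rw [log_sub' (a := 1) hx0 (by linarith), log_sub' (a := 2 * q) hx0 hq,
      log_sub' (a := 3 / 2) hx0 (by linarith)]
    ring
  rw [← hE, hrec, eq_div_iff hG.ne']
  ring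
end

section
/- For every fixed real number $q$, $\lim_{x \to +\infty} \dfrac{\sqrt{2\pi}\, e^{2q - x}\, (x-1)\, (x - 2q)^{x-3} \;-\; \Gamma\!\left(x - \tfrac{3}{2}\right) \;-\; \tfrac{1}{2}\,\Gamma\!\left(x - \tfrac{5}{2}\right)\left(-\tfrac{71}{12} + 12 q - 4 q^2\right)}{\Gamma\!\left(x - \tfrac{7}{2}\right)} \;=\; \frac{1}{4}\left(\frac{11545}{288} - 131 q + \frac{419 q^2}{3} - \frac{176 q^3}{3} + 8 q^4\right)$. (This identifies the polynomial $\mathcal{P}_2(q)$ in the diagonal asymptotic expansion.) -/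
open Real Filter Topology

noncomputable def stRem (y : ℝ) : ℝ :=
  Real.log (Real.Gamma y) -
    ((y - 1 / 2) * Real.log y - y + Real.log (2 * Real.pi) / 2 + 1 / (12 * y))

lemma log_cubic_bound {u : ℝ} (hu : |u| ≤ 1 / 2) :
    |Real.log (1 + u) - u + u ^ 2 / 2 - u ^ 3 / 3| ≤ 2 * |u| ^ 4 := by
  have h := Real.abs_log_sub_add_sum_range_le (x := -u) (by rw [abs_neg]; linarith) 3
  simp only [Finset.sum_range_succ, Finset.sum_range_zero, abs_neg] at h
  have e : Real.log (1 + u) - u + u ^ 2 / 2 - u ^ 3 / 3 =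
      0 + (-u) ^ (0 + 1) / (((0 : ℕ) : ℝ) + 1) + (-u) ^ (1 + 1) / (((1 : ℕ) : ℝ) + 1) +
        (-u) ^ (2 + 1) / (((2 : ℕ) : ℝ) + 1) + Real.log (1 - -u) := by
    rw [sub_neg_eq_add]; push_cast; ring
  rw [e]
  refine h.trans ?_
  rw [div_le_iff₀ (by linarith)]
  generalize |u| = v at *
  have h4 : 0 ≤ v ^ 4 * (1 / 2 - v) := mul_nonneg (by positivity) (by linarith)
  have e4 : 2 * v ^ 4 * (1 - v) = v ^ (3 + 1) + 2 * (v ^ 4 * (1 / 2 - v)) := by ring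
  rw [e4]
  linarith

lemma tendsto_c_div (c : ℝ) : Tendsto (fun y : ℝ => c / y) atTop (𝓝 0) :=
  tendsto_const_nhds.div_atTop tendsto_id

lemma ev_small (c : ℝ) : ∀ᶠ y : ℝ in atTop, |c / y| ≤ 1 / 2 := by
  have h := (tendsto_c_div c).abs
  rw [abs_zero] at h
  exact h.eventually (ge_mem_nhds (by norm_num))

lemma log_lim3 (c : ℝ) : Tendsto
    (fun y : ℝ => y ^ 3 * (Real.log (1 + c / y) - c / y + c ^ 2 / (2 * y ^ 2)))
    atTop (𝓝 (c ^ 3 / 3)) := by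
  rw [tendsto_iff_norm_sub_tendsto_zero]
  refine squeeze_zero' (Eventually.of_forall fun _ => norm_nonneg _) ?_
    (tendsto_c_div (2 * |c| ^ 4))
  filter_upwards [ev_small c, eventually_gt_atTop 0] with y hy hy0
  have h := log_cubic_bound hy
  have e : y ^ 3 * (Real.log (1 + c / y) - c / y + c ^ 2 / (2 * y ^ 2)) - c ^ 3 / 3 =
      y ^ 3 * (Real.log (1 + c / y) - c / y + (c / y) ^ 2 / 2 - (c / y) ^ 3 / 3) := by
    field_simp
  rw [e, Real.norm_eq_abs, abs_mul, abs_of_pos (pow_pos hy0 3)]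
  refine (mul_le_mul_of_nonneg_left h (pow_pos hy0 3).le).trans (le_of_eq ?_)
  rw [abs_div, abs_of_pos hy0]
  field_simp

lemma log_lim2 (c : ℝ) : Tendsto
    (fun y : ℝ => y ^ 2 * (Real.log (1 + c / y) - c / y)) atTop (𝓝 (-c ^ 2 / 2)) := by
  have h := ((log_lim3 c).mul (tendsto_c_div 1)).add_const (-c ^ 2 / 2)
  simp only [mul_zero, zero_add] at h
  refine h.congr' ?_
  filter_upwards [eventually_gt_atTop 0] with y hy0
  field_simp
  ring

lemma log_step (y : ℝ) (hy : 0 < y) :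
    1 + 1 / (3 * (2 * y + 1) ^ 2) ≤ (y + 1 / 2) * Real.log (1 + y⁻¹) ∧
    (y + 1 / 2) * Real.log (1 + y⁻¹) ≤ 1 + 1 / (12 * y * (y + 1)) := by
  have h := (Real.hasSum_log_one_add_inv hy).mul_left (y + 1 / 2)
  have hpos : ∀ k : ℕ, 0 ≤ (y + 1 / 2) *
      ((2 : ℝ) * (1 / (2 * k + 1)) * (1 / (2 * y + 1)) ^ (2 * k + 1)) := fun k => by positivity
  constructor
  · have h2 := sum_le_hasSum (Finset.range 2) (fun k _ => hpos k) h
    refine le_trans (le_of_eq ?_) h2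
    simp only [Finset.sum_range_succ, Finset.sum_range_zero]
    push_cast
    field_simp
    ring
  · set r : ℝ := (1 / (2 * y + 1)) ^ 2 with hr
    have hr0 : 0 ≤ r := by positivity
    have hr1 : r < 1 := by
      rw [hr, div_pow, one_pow, div_lt_one (by positivity)]
      nlinarith
    have hg := (hasSum_geometric_of_lt_one hr0 hr1).mul_left (r / 3)
    have hz := (hasSum_nat_add_iff' 1).mpr h
    have := hasSum_le (fun k => ?_) hz hg
    · simp only [Finset.sum_range_succ, Finset.sum_range_zero] at this
      have e1 : r / 3 * (1 - r)⁻¹ = 1 / (12 * y * (y + 1)) := by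
        have : 1 - r = 4 * y * (y + 1) / (2 * y + 1) ^ 2 := by
          rw [hr]; field_simp; ring
        rw [this, hr]; field_simp; norm_num
      rw [e1] at this
      have e2 : (y + 1 / 2) * ((2 : ℝ) * (1 / (2 * ((0 : ℕ) : ℝ) + 1)) *
          (1 / (2 * y + 1)) ^ (2 * 0 + 1)) = 1 := by
        push_cast; field_simp; try ring
      rw [e2] at this
      linarith
    · have e3 : (y + 1 / 2) * ((2 : ℝ) * (1 / (2 * ((k + 1 : ℕ) : ℝ) + 1)) *
          (1 / (2 * y + 1)) ^ (2 * (k + 1) + 1)) = (1 / (2 * ((k + 1 : ℕ) : ℝ) + 1)) * (r * r ^ k) := by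
        rw [← pow_succ', hr, ← pow_mul, pow_succ _ (2 * (k + 1))]
        field_simp
      rw [e3]
      have : (1 / (2 * ((k + 1 : ℕ) : ℝ) + 1)) ≤ 1 / 3 := by
        apply one_div_le_one_div_of_le (by norm_num)
        push_cast
        have : (0 : ℝ) ≤ k := Nat.cast_nonneg k
        linarith
      calc _ ≤ 1 / 3 * (r * r ^ k) := mul_le_mul_of_nonneg_right this (by positivity)
        _ = _ := by ring

lemma stRem_diff (y : ℝ) (hy : 0 < y) :
    stRem y - stRem (y + 1) = (y + 1 / 2) * Real.log (1 + y⁻¹) - 1 - 1 / (12 * y * (y + 1)) := by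
  unfold stRem
  have e : 1 + y⁻¹ = (y + 1) / y := by field_simp
  rw [Real.Gamma_add_one hy.ne', Real.log_mul hy.ne' (Real.Gamma_pos_of_pos hy).ne', e,
    Real.log_div (by positivity) hy.ne']
  field_simp
  ring

lemma stRem_le (y : ℝ) (hy : 0 < y) : stRem y ≤ stRem (y + 1) := by
  have h1 := stRem_diff y hy
  have h2 := (log_step y hy).2
  linarith

lemma stRem_ge (y : ℝ) (hy : 0 < y) :
    stRem (y + 1) + 1 / (y + 1) ^ 3 ≤ stRem y + 1 / y ^ 3 := by
  have h1 := stRem_diff y hy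
  have h2 := (log_step y hy).1
  have h3 : 0 ≤ 1 / y ^ 3 - 1 / (y + 1) ^ 3 + 1 / (3 * (2 * y + 1) ^ 2) - 1 / (12 * y * (y + 1)) := by
    have : 1 / y ^ 3 - 1 / (y + 1) ^ 3 + 1 / (3 * (2 * y + 1) ^ 2) - 1 / (12 * y * (y + 1)) =
      (12 * (3 * y ^ 2 + 3 * y + 1) * (2 * y + 1) ^ 2 - y ^ 2 * (y + 1) ^ 2) /
        (12 * y ^ 3 * (y + 1) ^ 3 * (2 * y + 1) ^ 2) := by
      field_simp; ring
    rw [this]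
    apply div_nonneg _ (by positivity)
    ring_nf
    positivity
  linarith

lemma stRem_lim (y : ℝ) (hy : 0 < y) :
    Tendsto (fun n : ℕ => stRem (y + (n + 1 : ℕ))) atTop (𝓝 0) := by
  have h1 := Real.BohrMollerup.tendsto_log_gamma hy
  have h2 : Tendsto (fun n : ℕ => Real.log (Stirling.stirlingSeq n)) atTop (𝓝 (Real.log (√π))) :=
    Stirling.tendsto_stirlingSeq_sqrt_pi.log (by positivity)
  have h3 : Tendsto (fun n : ℕ => (n : ℝ) * Real.log (1 + (y + 1) / n)) atTop (𝓝 (y + 1)) :=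
    (Real.tendsto_mul_log_one_add_div_atTop (y + 1)).comp tendsto_natCast_atTop_atTop
  have h4 : Tendsto (fun n : ℕ => Real.log (1 + (y + 1) / (n : ℝ))) atTop (𝓝 0) := by
    have := ((tendsto_c_div (y + 1)).comp tendsto_natCast_atTop_atTop (α := ℕ)).const_add 1
    have := this.log (by norm_num)
    simpa using this
  have h5 : Tendsto (fun n : ℕ => 1 / (12 * (y + (n + 1 : ℕ)))) atTop (𝓝 0) := by
    refine tendsto_const_nhds.div_atTop ?_
    refine Tendsto.const_mul_atTop (by norm_num) ?_
    refine tendsto_atTop_add_const_left _ _ ?_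
    exact tendsto_natCast_atTop_atTop.comp (tendsto_add_atTop_nat 1)
  have h := (((((h1.const_sub (Real.log (Real.Gamma y))).add h2).sub h3).sub
    (h4.const_mul (y + 1 / 2))).sub h5).add_const (y + 1 - Real.log π / 2)
  have e0 : Real.log (Real.Gamma y) - Real.log (Real.Gamma y) + Real.log (√π) - (y + 1) -
      (y + 1 / 2) * 0 - 0 + (y + 1 - Real.log π / 2) = 0 := by
    rw [Real.log_sqrt Real.pi_pos.le]; ring
  rw [e0] at h
  refine h.congr' ?_
  filter_upwards [eventually_gt_atTop 0] with n hn
  have hn' : (0 : ℝ) < n := Nat.cast_pos.mpr hn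
  have hG := Real.BohrMollerup.f_add_nat_eq (f := Real.log ∘ Real.Gamma)
    (fun {y} hy => by
      rw [Function.comp_apply, Real.Gamma_add_one hy.ne',
        Real.log_mul hy.ne' (Real.Gamma_pos_of_pos hy).ne', add_comm, Function.comp_apply])
    hy (n + 1)
  simp only [Function.comp_apply] at hG
  unfold stRem
  rw [hG, Stirling.log_stirlingSeq_formula, Real.BohrMollerup.logGammaSeq]
  have e : 1 + (y + 1) / (n : ℝ) = (y + (n + 1 : ℕ)) / n := by push_cast; field_simp; ring
  rw [e, Real.log_div (by positivity) hn'.ne', Real.log_div hn'.ne' (by positivity), Real.log_exp,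
    Real.log_mul (by norm_num) hn'.ne', Real.log_mul (by norm_num) Real.pi_pos.ne']
  push_cast
  ring

lemma stRem_bounds (y : ℝ) (hy : 0 < y) : -(1 / y ^ 3) ≤ stRem y ∧ stRem y ≤ 0 := by
  have hl := stRem_lim y hy
  constructor
  · have hm : ∀ n : ℕ, stRem (y + n) + 1 / (y + n) ^ 3 ≤ stRem y + 1 / y ^ 3 := by
      intro n
      induction n with
      | zero => simp
      | succ n ih =>
        have := stRem_ge (y + n) (by positivity)
        rw [Nat.cast_succ, ← add_assoc]
        linarith
    have : ∀ n : ℕ, stRem (y + (n + 1 : ℕ)) ≤ stRem y + 1 / y ^ 3 := fun n => by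
      have h1 := hm (n + 1)
      have h2 : 0 ≤ 1 / (y + (n + 1 : ℕ)) ^ 3 := by positivity
      linarith
    have := le_of_tendsto' hl this
    linarith
  · have hm : ∀ n : ℕ, stRem y ≤ stRem (y + n) := by
      intro n
      induction n with
      | zero => simp
      | succ n ih =>
        have := stRem_le (y + n) (by positivity)
        rw [Nat.cast_succ, ← add_assoc]
        linarith
    exact ge_of_tendsto' hl fun n => hm (n + 1)

lemma stRem_lim2 : Tendsto (fun y : ℝ => y ^ 2 * stRem y) atTop (𝓝 0) := by
  have h := (tendsto_c_div 1).neg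
  rw [neg_zero] at h
  refine tendsto_of_tendsto_of_tendsto_of_le_of_le' h tendsto_const_nhds ?_ ?_
  · filter_upwards [eventually_gt_atTop 0] with y hy
    have := mul_le_mul_of_nonneg_left (stRem_bounds y hy).1 (sq_nonneg y)
    refine le_trans (le_of_eq ?_) this
    field_simp
  · filter_upwards [eventually_gt_atTop 0] with y hy
    exact mul_nonpos_of_nonneg_of_nonpos (sq_nonneg y) (stRem_bounds y hy).2

lemma exp_lim {M : ℝ → ℝ} {a b : ℝ}
    (hM : Tendsto (fun y : ℝ => y ^ 2 * (M y - a / y)) atTop (𝓝 b)) :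
    Tendsto (fun y : ℝ => y ^ 2 * (Real.exp (M y) - 1 - a / y)) atTop (𝓝 (b + a ^ 2 / 2)) := by
  have h1 : Tendsto (fun y : ℝ => y * M y) atTop (𝓝 a) := by
    have h := (hM.mul (tendsto_c_div 1)).add_const a
    simp only [mul_zero, zero_add] at h
    refine h.congr' ?_
    filter_upwards [eventually_gt_atTop 0] with y hy0
    field_simp
    ring
  have h0 : Tendsto M atTop (𝓝 0) := by
    have h := h1.mul (tendsto_c_div 1)
    simp only [mul_zero] at h
    refine h.congr' ?_
    filter_upwards [eventually_gt_atTop 0] with y hy0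
    field_simp
  have h2 : Tendsto (fun y : ℝ => y ^ 2 * (Real.exp (M y) - 1 - M y - M y ^ 2 / 2)) atTop (𝓝 0) := by
    rw [tendsto_zero_iff_norm_tendsto_zero]
    have hb := (h1.pow 2).mul h0.abs
    rw [abs_zero, mul_zero] at hb
    refine squeeze_zero' (Eventually.of_forall fun _ => norm_nonneg _) ?_ hb
    have hs := h0.abs
    rw [abs_zero] at hs
    filter_upwards [hs.eventually (ge_mem_nhds (show (0 : ℝ) < 1 by norm_num))] with y hy
    have h := Real.exp_bound hy (n := 3) (by norm_num)
    have e : Real.exp (M y) - 1 - M y - M y ^ 2 / 2 =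
        Real.exp (M y) - ∑ m ∈ Finset.range 3, M y ^ m / (m.factorial : ℝ) := by
      simp [Finset.sum_range_succ, Nat.factorial]; ring
    rw [e, Real.norm_eq_abs, abs_mul, abs_of_nonneg (sq_nonneg y), mul_pow, mul_assoc]
    refine mul_le_mul_of_nonneg_left (h.trans ?_) (sq_nonneg y)
    have e2 : M y ^ 2 * |M y| = |M y| ^ 3 := by rw [← sq_abs]; ring
    rw [e2]
    have : 0 ≤ |M y| ^ 3 := by positivity
    norm_num [Nat.factorial]
    linarith
  have h := (h2.add hM).add ((h1.pow 2).div_const 2)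
  rw [zero_add] at h
  refine h.congr' ?_
  filter_upwards [eventually_gt_atTop 0] with y hy0
  ring

lemma M_lim (c : ℝ) : Tendsto (fun y : ℝ => y ^ 2 *
    ((Real.log (1 + (5 / 2) / y) + (y + 1 / 2) * Real.log (1 + c / y) - c - 1 / (12 * y) - stRem y)
      - (5 / 2 - c ^ 2 / 2 + c / 2 - 1 / 12) / y)) atTop
    (𝓝 (-25 / 8 + c ^ 3 / 3 - c ^ 2 / 4)) := by
  have h := (((log_lim2 (5 / 2)).add (log_lim3 c)).add ((log_lim2 c).div_const 2)).sub stRem_lim2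
  have e : -(5 / 2 : ℝ) ^ 2 / 2 + c ^ 3 / 3 + -c ^ 2 / 2 / 2 - 0 =
    -25 / 8 + c ^ 3 / 3 - c ^ 2 / 4 := by ring
  rw [e] at h
  refine h.congr' ?_
  filter_upwards [eventually_gt_atTop 0] with y hy0
  field_simp
  ring

lemma main_y (q : ℝ) : Tendsto
      (fun y : ℝ =>
        (Real.sqrt (2 * Real.pi) * Real.exp (2 * q - (y + 7 / 2)) * (y + 5 / 2) *
            (y + (7 / 2 - 2 * q)) ^ (y + 1 / 2) -
            Real.Gamma (y + 2) -
            1 / 2 * Real.Gamma (y + 1) * (-(71 / 12) + 12 * q - 4 * q ^ 2)) /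
          Real.Gamma y)
      atTop
      (𝓝 (1 / 4 * (11545 / 288 - 131 * q + 419 * q ^ 2 / 3 - 176 * q ^ 3 / 3 + 8 * q ^ 4))) := by
  have h := exp_lim (M_lim (7 / 2 - 2 * q))
  have e : -25 / 8 + (7 / 2 - 2 * q) ^ 3 / 3 - (7 / 2 - 2 * q) ^ 2 / 4 +
      (5 / 2 - (7 / 2 - 2 * q) ^ 2 / 2 + (7 / 2 - 2 * q) / 2 - 1 / 12) ^ 2 / 2 =
      1 / 4 * (11545 / 288 - 131 * q + 419 * q ^ 2 / 3 - 176 * q ^ 3 / 3 + 8 * q ^ 4) := by ring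
  rw [e] at h
  refine h.congr' ?_
  filter_upwards [eventually_gt_atTop 0, eventually_gt_atTop (-(7 / 2 - 2 * q))] with y hy hyc
  set c := 7 / 2 - 2 * q with hc
  have hyc' : 0 < y + c := by linarith
  have hG := Real.Gamma_pos_of_pos hy
  have hG1 : Real.Gamma (y + 1) = y * Real.Gamma y := Real.Gamma_add_one hy.ne'
  have hG2 : Real.Gamma (y + 2) = (y + 1) * (y * Real.Gamma y) := by
    rw [← hG1, ← Real.Gamma_add_one (by positivity)]; ring_nf
  have key : Real.sqrt (2 * Real.pi) * Real.exp (2 * q - (y + 7 / 2)) * (y + 5 / 2) *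
            (y + c) ^ (y + 1 / 2) = Real.Gamma y * (y ^ 2 * Real.exp (Real.log (1 + (5 / 2) / y) +
            (y + 1 / 2) * Real.log (1 + c / y) - c - 1 / (12 * y) - stRem y)) := by
    apply Real.log_injOn_pos
    · rw [Set.mem_Ioi]
      positivity
    · rw [Set.mem_Ioi]
      positivity
    have p1 : (0 : ℝ) < Real.sqrt (2 * Real.pi) := by positivity
    have p2 := Real.exp_pos (2 * q - (y + 7 / 2))
    have p3 : (y + c) ^ (y + 1 / 2) ≠ 0 := (Real.rpow_pos_of_pos hyc' _).ne'
    rw [Real.log_mul (by positivity) p3, Real.log_mul (by positivity) (by positivity),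
      Real.log_mul p1.ne' p2.ne', Real.log_exp, Real.log_rpow hyc', Real.log_sqrt (by positivity),
      Real.log_mul (x := Real.Gamma y) hG.ne' (by positivity), Real.log_mul (x := y ^ 2) (by positivity) (by positivity),
      Real.log_exp, Real.log_pow]
    have e1 : 1 + (5 / 2) / y = (y + 5 / 2) / y := by field_simp
    have e2 : 1 + c / y = (y + c) / y := by field_simp
    rw [e1, e2, Real.log_div (by positivity) hy.ne', Real.log_div hyc'.ne' hy.ne']
    unfold stRem
    rw [Real.log_mul (by norm_num) Real.pi_pos.ne']
    push_cast
    rw [hc]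
    ring
  rw [key, hG1, hG2]
  field_simp
  rw [hc]
  ring

/-- the next subleading diagonal asymptotics identify the polynomial
`𝒫_2(q) = 11545/288 - 131q + 419q²/3 - 176q³/3 + 8q⁴`. -/
theorem diagonal_subleading_P2 (q : ℝ) :
    Tendsto
      (fun x : ℝ =>
        (Real.sqrt (2 * Real.pi) * Real.exp (2 * q - x) * (x - 1) * (x - 2 * q) ^ (x - 3) -
            Real.Gamma (x - 3 / 2) -
            1 / 2 * Real.Gamma (x - 5 / 2) * (-(71 / 12) + 12 * q - 4 * q ^ 2)) /
          Real.Gamma (x - 7 / 2))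
      atTop
      (𝓝 (1 / 4 * (11545 / 288 - 131 * q + 419 * q ^ 2 / 3 - 176 * q ^ 3 / 3 + 8 * q ^ 4))) := by
  have h := (main_y q).comp (tendsto_atTop_add_const_right atTop (-(7 / 2 : ℝ)) tendsto_id)
  refine h.congr fun x => ?_
  simp only [Function.comp_apply, id]
  rw [show x + -(7 / 2) + 7 / 2 = x by ring, show x + -(7 / 2) + 5 / 2 = x - 1 by ring,
    show x + -(7 / 2) + (7 / 2 - 2 * q) = x - 2 * q by ring,
    show x + -(7 / 2) + 1 / 2 = x - 3 by ring, show x + -(7 / 2) + 2 = x - 3 / 2 by ring,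
    show x + -(7 / 2) + 1 = x - 5 / 2 by ring, show x + -(7 / 2) = x - 7 / 2 by ring]
end

section
/- For every fixed real number $q$, $\lim_{x \to +\infty} \dfrac{\sqrt{2\pi}\, e^{2q - x}\, (x-1)\, (x - 2q)^{x-3} - \Gamma\!\left(x - \tfrac{3}{2}\right) - \tfrac{1}{2}\Gamma\!\left(x - \tfrac{5}{2}\right)\mathcal{P}_1(q) - \tfrac{1}{4}\Gamma\!\left(x - \tfrac{7}{2}\right)\mathcal{P}_2(q)}{\Gamma\!\left(x - \tfrac{9}{2}\right)} = \frac{1}{8}\left(-\frac{17534803}{51840} + \frac{33553 q}{24} - \frac{157393 q^2}{72} + \frac{15220 q^3}{9} - \frac{2062 q^4}{3} + \frac{416 q^5}{3} - \frac{32 q^6}{3}\right)$, where $\mathcal{P}_1(q) = -\tfrac{71}{12} + 12q - 4q^2$ and $\mathcal{P}_2(q) = \tfrac{11545}{288} - 131 q + \tfrac{419 q^2}{3} - \tfrac{176 q^3}{3} + 8 q^4$. (This identifies the polynomial $\mathcal{P}_3(q)$ in the diagonal asymptotic expansion.) -/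
open Real Filter Topology

lemma contO (f : ℝ → ℝ) (hf : ContinuousAt f 0) :
    (fun y : ℝ => f y⁻¹) =O[atTop] (fun _ => (1 : ℝ)) :=
  (hf.tendsto.comp tendsto_inv_atTop_zero).isBigO_one ℝ

lemma contOpow (f : ℝ → ℝ) (hf : ContinuousAt f 0) (n : ℕ) :
    (fun y : ℝ => f y⁻¹ * y⁻¹ ^ n) =O[atTop] (fun y : ℝ => y⁻¹ ^ n) := by
  simpa using (contO f hf).mul (Asymptotics.isBigO_refl (fun y : ℝ => y⁻¹ ^ n) atTop)

lemma logO (a : ℝ) (n : ℕ) :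
    (fun y : ℝ => (∑ i ∈ Finset.range n, (-(a * y⁻¹)) ^ (i + 1) / (i + 1)) + log (1 + a * y⁻¹))
      =O[atTop] (fun y : ℝ => y⁻¹ ^ (n + 1)) := by
  apply Asymptotics.IsBigO.of_bound (2 * |a| ^ (n + 1))
  have h : Tendsto (fun y : ℝ => |a * y⁻¹|) atTop (𝓝 0) := by
    simpa using (tendsto_inv_atTop_zero.const_mul a).abs
  filter_upwards [h.eventually_le_const (show (0:ℝ) < 1/2 by norm_num)] with y hy
  have := Real.abs_log_sub_add_sum_range_le (x := -(a * y⁻¹)) (by rw [abs_neg]; linarith) n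
  rw [sub_neg_eq_add, abs_neg] at this
  refine this.trans ?_
  rw [norm_pow, Real.norm_eq_abs, abs_mul, mul_pow, ← abs_mul]
  rw [div_le_iff₀ (by linarith)]
  have h0 : 0 ≤ |a| ^ (n+1) * |y⁻¹| ^ (n+1) := by positivity
  nlinarith

/-- Stirling remainder -/
noncomputable def stR (y : ℝ) : ℝ :=
  log (Gamma y) - ((y - 1/2) * log y - y + 1/2 * log (2 * π) + 1/12 * y⁻¹ - 1/360 * y⁻¹ ^ 3)

lemma logGamma_succ {y : ℝ} (hy : 0 < y) : log (Gamma (y + 1)) = log (Gamma y) + log y := by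
  rw [Gamma_add_one hy.ne', log_mul hy.ne' (Gamma_pos_of_pos hy).ne', add_comm]

lemma stR_diff : (fun y : ℝ => stR (y + 1) - stR y) =O[atTop] (fun y : ℝ => y⁻¹ ^ 5) := by
  have h1 := logO 1 5
  have h2 : (fun y : ℝ => -(1 + 1/2 * y⁻¹)) =O[atTop] (fun _ => (1 : ℝ)) :=
    contO (fun t => -(1 + 1/2 * t)) (by fun_prop)
  have h3 : (fun y : ℝ => y) =O[atTop] (fun y : ℝ => y) := Asymptotics.isBigO_refl _ _
  have h4 := contOpow (fun t => (-(1/6) - 4/9*t - 3/8*t^2 - 1/10*t^3) / (1 + t) ^ 3)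
    (by refine ContinuousAt.div (by fun_prop) (by fun_prop) (by norm_num)) 5
  have h5 := ((h2.mul h3).mul h1)
  have h6 : (fun y : ℝ => 1 * y * y⁻¹ ^ (5 + 1)) =O[atTop] (fun y : ℝ => y⁻¹ ^ 5) := by
    apply Asymptotics.IsBigO.of_bound 1
    filter_upwards [eventually_gt_atTop 0] with y hy
    apply le_of_eq
    rw [one_mul, one_mul]
    congr 1
    norm_num
    field_simp
  refine ((h5.trans h6).add h4).congr' ?_ (EventuallyEq.refl _ _)
  filter_upwards [eventually_gt_atTop 0] with y hy
  have hl : log (1 + 1 * y⁻¹) = log (y + 1) - log y := by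
    rw [← log_div (by positivity) hy.ne']
    congr 1
    field_simp
  rw [hl]
  simp only [stR, logGamma_succ hy, Finset.sum_range_succ, Finset.sum_range_zero]
  generalize log (y+1) = A
  generalize log y = B
  have : y + 1 ≠ 0 := by positivity
  push_cast
  field_simp
  ring

lemma stR_lim {y : ℝ} (hy : 0 < y) : Tendsto (fun n : ℕ => stR (y + n)) atTop (𝓝 0) := by
  rw [← tendsto_add_atTop_iff_nat 1]
  have h1 : Tendsto (fun n : ℕ => log (Gamma y) - BohrMollerup.logGammaSeq y n) atTop (𝓝 0) := by
    simpa using (tendsto_const_nhds (x := log (Gamma y))).sub (BohrMollerup.tendsto_log_gamma hy)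
  have h2 : Tendsto (fun n : ℕ => log (Stirling.stirlingSeq n) - 1/2 * log π) atTop (𝓝 0) := by
    have := (Stirling.tendsto_stirlingSeq_sqrt_pi.log (by positivity)).sub_const (1/2 * log π)
    rw [log_sqrt pi_pos.le] at this
    convert this using 2
    ring
  have h3 : Tendsto (fun n : ℕ => (n : ℝ) * log (1 + (y+1) / n)) atTop (𝓝 (y + 1)) :=
    (tendsto_mul_log_one_add_div_atTop (y+1)).comp tendsto_natCast_atTop_atTop
  have h4 : Tendsto (fun n : ℕ => log (1 + (y+1) / n)) atTop (𝓝 0) := by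
    have : Tendsto (fun n : ℕ => 1 + (y+1) / (n:ℝ)) atTop (𝓝 (1 + 0)) :=
      (tendsto_const_div_atTop_nhds_zero_nat (y+1)).const_add 1
    simpa using this.log (by norm_num)
  have h5 : Tendsto (fun n : ℕ => (y + (n + 1 : ℕ) : ℝ)⁻¹) atTop (𝓝 0) :=
    tendsto_inv_atTop_zero.comp (tendsto_atTop_add_const_left _ _
      (tendsto_natCast_atTop_atTop.comp (tendsto_add_atTop_nat 1)))
  have := ((((h1.add h2).sub h3).sub (h4.const_mul (y + 1/2))).add_const (y + 1)).add
    ((h5.const_mul (-1/12)).add ((h5.pow 3).const_mul (1/360)))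
  refine Tendsto.congr' ?_ (by simpa using this)
  filter_upwards [eventually_gt_atTop 0] with n hn
  have hn' : (0:ℝ) < n := by exact_mod_cast hn
  have hG := BohrMollerup.f_add_nat_eq (f := fun y => log (Gamma y)) (fun {y} hy => logGamma_succ hy) hy (n+1)
  have hl : log (1 + (y+1) / n) = log (y + (n + 1 : ℕ)) - log n := by
    rw [← log_div (by positivity) hn'.ne']
    congr 1
    push_cast
    field_simp
    ring
  replace hG : log (Gamma (y + (n + 1 : ℕ))) = _ := hG
  rw [stR, hG, hl, BohrMollerup.logGammaSeq, Stirling.log_stirlingSeq_formula,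
    log_mul two_ne_zero hn'.ne', log_div hn'.ne' (exp_ne_zero _), log_exp,
    log_mul two_ne_zero pi_ne_zero]
  push_cast
  simp only [← inv_pow]
  generalize (y + ((n : ℝ) + 1))⁻¹ = T
  ring

lemma stR_O : stR =O[atTop] (fun y : ℝ => y⁻¹ ^ 4) := by
  obtain ⟨C, hC0, hC⟩ := stR_diff.exists_pos
  rw [Asymptotics.IsBigOWith, eventually_atTop] at hC
  obtain ⟨Y, hY⟩ := hC
  apply Asymptotics.IsBigO.of_bound (4 * C)
  filter_upwards [eventually_ge_atTop Y, eventually_ge_atTop 1] with y hy hy1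
  have key : ∀ z : ℝ, Y ≤ z → 1 ≤ z → |stR (z + 1) - stR z| ≤ 4 * C * (z⁻¹ ^ 4 - (z+1)⁻¹ ^ 4) := by
    intro z hz hz1
    have h := hY z hz
    rw [Real.norm_eq_abs, Real.norm_eq_abs, abs_of_nonneg (by positivity : 0 ≤ z⁻¹ ^ 5)] at h
    refine h.trans ?_
    have : z⁻¹ ^ 5 ≤ 4 * (z⁻¹ ^ 4 - (z+1)⁻¹ ^ 4) := by
      have e : 4 * (z⁻¹ ^ 4 - (z+1)⁻¹ ^ 4) = (4 * z * (4*z^3+6*z^2+4*z+1) / (z+1)^4) * z⁻¹^5 := by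
        field_simp
        ring
      rw [e]
      refine le_mul_of_one_le_left (by positivity) ?_
      rw [one_le_div (by positivity)]
      have : 0 < z := by linarith
      have h2 : 1 ≤ z^2 := by nlinarith
      nlinarith [pow_pos this 2, pow_pos this 3, pow_pos this 4]
    nlinarith
  have ind : ∀ n : ℕ, |stR (y + n) - stR y| ≤ 4 * C * (y⁻¹ ^ 4 - (y+n)⁻¹ ^ 4) := by
    intro n
    induction n with
    | zero => simp
    | succ n ih =>
      have hn : (0:ℝ) ≤ n := n.cast_nonneg
      have h := key (y + n) (by linarith) (by linarith)
      rw [Nat.cast_succ, ← add_assoc]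
      have := abs_sub_le (stR (y + n + 1)) (stR (y+n)) (stR y)
      linarith
  have hl : Tendsto (fun n : ℕ => |stR (y + n) - stR y|) atTop (𝓝 |0 - stR y|) :=
    ((stR_lim (by linarith)).sub_const _).abs
  rw [zero_sub, abs_neg] at hl
  rw [Real.norm_eq_abs, Real.norm_eq_abs, abs_of_nonneg (by positivity : 0 ≤ y⁻¹ ^ 4)]
  refine le_of_tendsto' hl (fun n => (ind n).trans ?_)
  have : 0 ≤ (y+n)⁻¹ ^ 4 := by positivity
  nlinarith

lemma exp_sub_O (u w : ℝ → ℝ) (hw : w =O[atTop] (fun y : ℝ => y⁻¹))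
    (huw : (fun y => u y - w y) =O[atTop] (fun y : ℝ => y⁻¹ ^ 4)) :
    (fun y => exp (u y) - (1 + w y + w y ^ 2 / 2 + w y ^ 3 / 6)) =O[atTop]
      (fun y : ℝ => y⁻¹ ^ 4) := by
  have t1 : (fun y : ℝ => y⁻¹ ^ 4) =O[atTop] (fun y : ℝ => y⁻¹) := by
    have := contOpow (fun t => t ^ 3) (by fun_prop) 1
    refine this.congr (fun y => by ring) (fun y => by ring)
  have t0 : (fun y : ℝ => y⁻¹) =O[atTop] (fun _ : ℝ => (1:ℝ)) := contO (fun t => t) (by fun_prop)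
  have hu : u =O[atTop] (fun y : ℝ => y⁻¹) := by
    simpa using (huw.trans t1).add hw
  have hu0 : Tendsto u atTop (𝓝 0) := hu.trans_tendsto tendsto_inv_atTop_zero
  have e1 : (fun y => exp (u y) - (1 + u y + u y ^ 2 / 2 + u y ^ 3 / 6)) =O[atTop]
      (fun y : ℝ => y⁻¹ ^ 4) := by
    refine Asymptotics.IsBigO.trans ?_ (hu.pow 4)
    apply Asymptotics.IsBigO.of_bound 1
    have h := hu0.abs
    rw [abs_zero] at h
    filter_upwards [h.eventually_le_const (show (0:ℝ) < 1 by norm_num)] with y hy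
    have := Real.exp_bound hy (n := 4) (by norm_num)
    simp only [Finset.sum_range_succ, Finset.sum_range_zero, Nat.factorial] at this
    rw [norm_pow, Real.norm_eq_abs, Real.norm_eq_abs, one_mul]
    norm_num at this
    have h0 : 0 ≤ |u y| ^ 4 := by positivity
    linarith
  have u1 := hu.trans t0
  have w1 := hw.trans t0
  have o1 : (fun _ : ℝ => (1:ℝ)) =O[atTop] (fun _ : ℝ => (1:ℝ)) := Asymptotics.isBigO_refl _ _
  have q2 : (fun y => 1 + (u y + w y) / 2 + (u y ^ 2 + u y * w y + w y ^ 2) / 6) =O[atTop]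
      (fun _ : ℝ => (1:ℝ)) := by
    have a1 := (u1.add w1).const_mul_left (1/2)
    have a2 := (((by simpa using u1.pow 2 : (fun y => u y ^ 2) =O[atTop] (fun _ : ℝ => (1:ℝ))).add
      (by simpa using u1.mul w1 : (fun y => u y * w y) =O[atTop] (fun _ : ℝ => (1:ℝ)))).add
      (by simpa using w1.pow 2 : (fun y => w y ^ 2) =O[atTop] (fun _ : ℝ => (1:ℝ)))).const_mul_left (1/6)
    refine ((o1.add a1).add a2).congr_left (fun y => by ring)
  have := e1.add ((huw.mul q2).congr_right (fun y => mul_one _))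
  exact this.congr_left (fun y => by ring)

lemma main_y_s13 (q a : ℝ) (ha : a = 9/2 - 2 * q) (u : ℝ → ℝ)
    (hu : u = fun y => -a + (y + 3/2) * log (1 + a * y⁻¹) - 1/12 * y⁻¹ + 1/360 * y⁻¹^3 - stR y) :
    Tendsto (fun y : ℝ => y ^ 3 * (1 + 7/2 * y⁻¹) * exp (u y) - ((y+2)*(y+1)*y
      + 1 / 2 * ((y+1)*y) * (-(71 / 12) + 12 * q - 4 * q ^ 2)
      + 1 / 4 * y * (11545 / 288 - 131 * q + 419 * q ^ 2 / 3 - 176 * q ^ 3 / 3 + 8 * q ^ 4)))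
      atTop (𝓝 (1 / 8 * (-(17534803 / 51840) + 33553 * q / 24 - 157393 * q ^ 2 / 72 +
        15220 * q ^ 3 / 9 - 2062 * q ^ 4 / 3 + 416 * q ^ 5 / 3 - 32 * q ^ 6 / 3))) := by
  obtain ⟨c1, hc1⟩ : ∃ c, c = 3*a/2 - a^2/2 - 1/12 := ⟨_, rfl⟩
  obtain ⟨c2, hc2⟩ : ∃ c, c = -3*a^2/4 + a^3/3 := ⟨_, rfl⟩
  obtain ⟨c3, hc3⟩ : ∃ c, c = a^3/2 - a^4/4 + 1/360 := ⟨_, rfl⟩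
  set w : ℝ → ℝ := fun y => c1 * y⁻¹ + c2 * y⁻¹^2 + c3 * y⁻¹^3 with hw
  have wO : w =O[atTop] (fun y : ℝ => y⁻¹) := by
    have := contOpow (fun t => c1 + c2 * t + c3 * t^2) (by fun_prop) 1
    refine this.congr (fun y => by rw [hw]; ring) (fun y => by ring)
  have uwO : (fun y => u y - w y) =O[atTop] (fun y : ℝ => y⁻¹ ^ 4) := by
    have h1 := logO a 4
    have h2 : (fun y : ℝ => (1 + 3/2 * y⁻¹)) =O[atTop] (fun _ => (1 : ℝ)) :=
      contO (fun t => (1 + 3/2 * t)) (by fun_prop)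
    have h3 : (fun y : ℝ => y) =O[atTop] (fun y : ℝ => y) := Asymptotics.isBigO_refl _ _
    have h5 := ((h2.mul h3).mul h1)
    have h6 : (fun y : ℝ => 1 * y * y⁻¹ ^ (4 + 1)) =O[atTop] (fun y : ℝ => y⁻¹ ^ 4) := by
      apply Asymptotics.IsBigO.of_bound 1
      filter_upwards [eventually_gt_atTop 0] with y hy
      apply le_of_eq
      rw [one_mul, one_mul]
      congr 1
      norm_num
      field_simp
    have h7 := contOpow (fun t => -(3/8) * a^4) (by fun_prop) 4
    refine (((h5.trans h6).sub stR_O).add h7).congr' ?_ (EventuallyEq.refl _ _)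
    filter_upwards [eventually_gt_atTop 0] with y hy
    rw [hu, hw, hc1, hc2, hc3]
    simp only [Finset.sum_range_succ, Finset.sum_range_zero]
    generalize log (1 + a * y⁻¹) = A
    generalize stR y = B
    push_cast
    field_simp
    ring
  have hE := exp_sub_O u w wO uwO
  have hE2 := (contO (fun t => 1 + 7/2 * t) (by fun_prop)).mul hE
  have hE3 := contOpow (fun t => (1 + 7/2 * t) * (1/2 * ((c2^2 + 2*c1*c3) + 2*c2*c3*t + c3^2*t^2)
    + 1/6 * (c2 + c3*t) * ((c1+c2*t+c3*t^2)^2 + (c1+c2*t+c3*t^2) * c1 + c1^2))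
    + 7/2 * (c3 + c1*c2 + c1^3/6)) (by fun_prop) 4
  have hE4 := ((hE2.congr_right (fun y => one_mul _)).add hE3)
  have hE5 := (Asymptotics.isBigO_refl (fun y : ℝ => y ^ 3) atTop).mul hE4
  have hlim : Tendsto (fun y : ℝ => y ^ 3 * y⁻¹ ^ 4) atTop (𝓝 0) := by
    refine tendsto_inv_atTop_zero.congr' ?_
    filter_upwards [eventually_gt_atTop 0] with y hy
    field_simp
  have hF := (hE5.trans_tendsto hlim).add_const (1 / 8 * (-(17534803 / 51840) + 33553 * q / 24 - 157393 * q ^ 2 / 72 +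
        15220 * q ^ 3 / 9 - 2062 * q ^ 4 / 3 + 416 * q ^ 5 / 3 - 32 * q ^ 6 / 3))
  rw [zero_add] at hF
  refine hF.congr' ?_
  filter_upwards [eventually_gt_atTop 0] with y hy
  generalize exp (u y) = X
  have k1 : c1 + 7/2 = 3 + 1/2 * (-(71 / 12) + 12 * q - 4 * q ^ 2) := by
    rw [hc1, ha]; ring
  have k2 : (c2 + c1^2/2) + 7/2 * c1 = 2 + 1/2 * (-(71 / 12) + 12 * q - 4 * q ^ 2) +
      1/4 * (11545 / 288 - 131 * q + 419 * q ^ 2 / 3 - 176 * q ^ 3 / 3 + 8 * q ^ 4) := by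
    rw [hc1, hc2, ha]; ring
  have k3 : (c3 + c1*c2 + c1^3/6) + 7/2 * (c2 + c1^2/2) = 1 / 8 * (-(17534803 / 51840) +
      33553 * q / 24 - 157393 * q ^ 2 / 72 +
        15220 * q ^ 3 / 9 - 2062 * q ^ 4 / 3 + 416 * q ^ 5 / 3 - 32 * q ^ 6 / 3) := by
    rw [hc1, hc2, hc3, ha]; ring
  rw [← k3]
  have k4 : (y+2)*(y+1)*y
      + 1 / 2 * ((y+1)*y) * (-(71 / 12) + 12 * q - 4 * q ^ 2)
      + 1 / 4 * y * (11545 / 288 - 131 * q + 419 * q ^ 2 / 3 - 176 * q ^ 3 / 3 + 8 * q ^ 4)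
      = y^3 + (c1 + 7/2) * y^2 + ((c2 + c1^2/2) + 7/2 * c1) * y := by
    rw [k1, k2]; ring
  rw [k4, hw]
  clear * - hy
  field_simp
  ring


/-- the third subleading diagonal asymptotics identify the polynomial
`𝒫_3(q)`, where `𝒫_1(q) = -71/12 + 12q - 4q²` and
`𝒫_2(q) = 11545/288 - 131q + 419q²/3 - 176q³/3 + 8q⁴`. -/
theorem diagonal_subleading_P3 (q : ℝ) :
    Tendsto
      (fun x : ℝ =>
        (Real.sqrt (2 * Real.pi) * Real.exp (2 * q - x) * (x - 1) * (x - 2 * q) ^ (x - 3) -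
            Real.Gamma (x - 3 / 2) -
            1 / 2 * Real.Gamma (x - 5 / 2) * (-(71 / 12) + 12 * q - 4 * q ^ 2) -
            1 / 4 * Real.Gamma (x - 7 / 2) *
              (11545 / 288 - 131 * q + 419 * q ^ 2 / 3 - 176 * q ^ 3 / 3 + 8 * q ^ 4)) /
          Real.Gamma (x - 9 / 2))
      atTop
      (𝓝 (1 / 8 * (-(17534803 / 51840) + 33553 * q / 24 - 157393 * q ^ 2 / 72 +
        15220 * q ^ 3 / 9 - 2062 * q ^ 4 / 3 + 416 * q ^ 5 / 3 - 32 * q ^ 6 / 3))) := by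
  
  obtain ⟨a, ha⟩ : ∃ a, a = 9/2 - 2 * q := ⟨_, rfl⟩
  have h := (main_y_s13 q a ha _ rfl).comp (tendsto_atTop_add_const_right atTop (-(9/2) : ℝ) tendsto_id)
  refine h.congr' ?_
  filter_upwards [eventually_gt_atTop (9/2 : ℝ), eventually_gt_atTop (2 * q)] with x hx hxq
  obtain ⟨y, hy⟩ : ∃ y, y = x - 9/2 := ⟨_, rfl⟩
  have hy0 : 0 < y := by linarith
  have hya : 0 < y + a := by linarith
  have hG := Gamma_pos_of_pos hy0
  have g1 : Gamma (y + 1) = y * Gamma y := Gamma_add_one hy0.ne'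
  have g2 : Gamma (y + 1 + 1) = (y + 1) * Gamma (y + 1) := Gamma_add_one (by positivity)
  have g3 : Gamma (y + 1 + 1 + 1) = (y + 1 + 1) * Gamma (y + 1 + 1) := Gamma_add_one (by positivity)
  simp only [Function.comp, id]
  rw [show x + -(9/2) = y by linarith, show x - 9/2 = y by linarith,
    show x - 3/2 = y + 1 + 1 + 1 by linarith, show x - 5/2 = y + 1 + 1 by linarith,
    show x - 7/2 = y + 1 by linarith, show x - 2 * q = y + a by linarith,
    show x - 1 = y + 7/2 by linarith, show x - 3 = y + 3/2 by linarith,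
    show 2 * q - x = -a - y by linarith, g3, g2, g1]
  have hl : log (1 + a * y⁻¹) = log (y + a) - log y := by
    rw [← log_div hya.ne' hy0.ne']
    congr 1
    field_simp
  have key : sqrt (2 * π) * exp (-a - y) * (y + 7/2) * (y + a) ^ (y + 3/2) =
      Gamma y * (y ^ 3 * (1 + 7/2 * y⁻¹) * exp (-a + (y + 3/2) * log (1 + a * y⁻¹) - 1/12 * y⁻¹
        + 1/360 * y⁻¹^3 - stR y)) := by
    have e1 : sqrt (2 * π) = exp (1/2 * log (2 * π)) := by
      rw [sqrt_eq_rpow, rpow_def_of_pos (by positivity), mul_comm]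
    have e2 : Gamma y = exp (log (Gamma y)) := (exp_log hG).symm
    have e3 : y ^ 3 * (1 + 7/2 * y⁻¹) = (y + 7/2) * exp (2 * log y) := by
      rw [mul_comm 2, exp_mul, exp_log hy0]
      norm_cast
      field_simp
    rw [e1, e2, e3, rpow_def_of_pos hya, hl, stR]
    have : ∀ A B C D E F c : ℝ, A + B + D = E + F + C →
      exp A * exp B * c * exp D = exp E * (c * exp F * exp C) := by
      intro A B C D E F c h
      calc _ = c * exp (A + B + D) := by rw [exp_add, exp_add]; ring
        _ = _ := by rw [h, exp_add, exp_add]; ring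
    apply this
    ring
  rw [key]
  field_simp
  ring
end

section
/- Fix an integer $d \ge 3$. Then, as the integer $g \to \infty$, the connected simple Hurwitz numbers satisfy $\lim_{g \to \infty} \; H_{g,d} \cdot \frac{(d!)^2}{2} \left(\frac{2}{d(d-1)}\right)^{2d + 2g - 2} \;=\; 1$; that is, $H_{g,d} \sim \frac{2}{(d!)^2} \left(\frac{d(d-1)}{2}\right)^{2d + 2g - 2}$ as $g \to \infty$. -/
open Real Filter Topology Equiv

/-- Connected simple Hurwitz numbers: `H_{g,d}` is `1/d!` times the number of tuples
`(τ₁, …, τ_b)` (with `b = 2g + 2d - 2`) of transpositions in `S_d` whose ordered product is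
the identity and which generate a subgroup acting transitively on `{1, …, d}`. -/
noncomputable def hurwitz (g d : ℕ) : ℝ :=
  (Nat.card {τ : Fin (2 * g + 2 * d - 2) → Equiv.Perm (Fin d) //
      (∀ i, (τ i).IsSwap) ∧ (List.ofFn τ).prod = 1 ∧
      ∀ x y : Fin d, ∃ σ ∈ Subgroup.closure (Set.range τ), σ x = y} : ℝ) /
    Nat.factorial d

open Finset in
lemma hz_pow_stoch {G : Type*} [Fintype G] [DecidableEq G] (Q : Matrix G G ℝ) (c : ℝ)
    (h0 : ∀ i j, 0 ≤ Q i j) (h1 : ∀ i, ∑ j, Q i j = c) (n : ℕ) :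
    (∀ i j, 0 ≤ (Q ^ n) i j) ∧ ∀ i, ∑ j, (Q ^ n) i j = c ^ n := by
  induction n with
  | zero =>
    refine ⟨fun i j => ?_, fun i => ?_⟩
    · simp only [pow_zero, Matrix.one_apply]; split_ifs <;> norm_num
    · simp [Matrix.one_apply]
  | succ n ih =>
    refine ⟨fun i j => ?_, fun i => ?_⟩
    · rw [pow_succ, Matrix.mul_apply]
      exact Finset.sum_nonneg fun x _ => mul_nonneg (ih.1 _ _) (h0 _ _)
    · simp only [pow_succ, Matrix.mul_apply]
      rw [Finset.sum_comm]
      simp only [← Finset.mul_sum, h1]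
      rw [← Finset.sum_mul, ih.2]

lemma hz_markov {G : Type*} [Fintype G] [DecidableEq G] (R U : Matrix G G ℝ)
    (hR0 : ∀ i j, 0 ≤ R i j) (hR1 : ∀ i, ∑ j, R i j = 1)
    (hU0 : ∀ i j, 0 ≤ U i j) (hU1 : ∀ i, ∑ j, U i j = 1)
    (hRU : R * U = U) (hUR : U * R = U) (hUU : U * U = U)
    (k : ℕ) (hk : 0 < k) (e : ℝ) (he : 0 < e) (he1 : e ≤ 1)
    (h : ∀ i j, e * U i j ≤ (R ^ k) i j) (i j : G) :
    Tendsto (fun n => (R ^ n) i j) atTop (𝓝 (U i j)) := by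
  set Q : Matrix G G ℝ := R ^ k - e • U with hQ
  have hRnU : ∀ n, R ^ n * U = U := by
    intro n
    induction n with
    | zero => simp
    | succ n ih => rw [pow_succ, mul_assoc, hRU, ih]
  have hURn : ∀ n, U * R ^ n = U := by
    intro n
    induction n with
    | zero => simp
    | succ n ih => rw [pow_succ, ← mul_assoc, ih, hUR]
  have hQ0 : ∀ i j, 0 ≤ Q i j := fun i j => by
    have := h i j
    simp only [hQ, Matrix.sub_apply, Matrix.smul_apply, smul_eq_mul]; linarith
  have hQ1 : ∀ i, ∑ j, Q i j = 1 - e := fun i => by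
    simp only [hQ, Matrix.sub_apply, Matrix.smul_apply, smul_eq_mul, Finset.sum_sub_distrib,
      ← Finset.mul_sum, hU1, (hz_pow_stoch R 1 hR0 hR1 k).2 i]
    simp
  have hQn : ∀ q : ℕ, R ^ (k * q) - U = Q ^ q - (1 - e) ^ q • U := by
    intro q
    induction q with
    | zero => simp
    | succ q ih =>
      have e1 : Q ^ q = R ^ (k * q) - U + (1 - e) ^ q • U := by rw [ih]; abel
      rw [pow_succ Q, e1, hQ, Nat.mul_succ, pow_add, pow_succ (1 - e)]
      simp only [mul_sub, add_mul, sub_mul, Matrix.mul_smul, Matrix.smul_mul, hRnU, hURn, hUU]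
      module
  have hle : ∀ (M : Matrix G G ℝ) (c : ℝ), (∀ i j, 0 ≤ M i j) → (∀ i, ∑ j, M i j = c) →
      ∀ i j, M i j ≤ c := fun M c h0 h1 i j => by
    rw [← h1 i]
    exact Finset.single_le_sum (f := fun j => M i j) (fun x _ => h0 i x) (Finset.mem_univ j)
  have hc0 : 0 ≤ 1 - e := by linarith
  have hD : ∀ q i j, |(R ^ (k * q) - U) i j| ≤ (1 - e) ^ q := by
    intro q i j
    obtain ⟨a0, a1⟩ := hz_pow_stoch Q _ hQ0 hQ1 q
    have b1 := hle _ _ a0 a1 i j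
    have b0 := a0 i j
    have c1 := hle _ _ hU0 hU1 i j
    have c0 := hU0 i j
    have d0 : 0 ≤ (1 - e) ^ q := pow_nonneg hc0 q
    rw [hQn]
    simp only [Matrix.sub_apply, Matrix.smul_apply, smul_eq_mul]
    rw [abs_le]
    constructor <;> nlinarith
  have hB : ∀ n, |(R ^ n) i j - U i j| ≤ (1 - e) ^ (n / k) := by
    intro n
    have e2 : R ^ n - U = R ^ (n % k) * (R ^ (k * (n / k)) - U) := by
      rw [mul_sub, hRnU, ← pow_add, Nat.mod_add_div]
    rw [← Matrix.sub_apply, e2, Matrix.mul_apply]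
    obtain ⟨a0, a1⟩ := hz_pow_stoch R _ hR0 hR1 (n % k)
    calc _ ≤ ∑ x, |(R ^ (n % k)) i x * (R ^ (k * (n / k)) - U) x j| :=
          Finset.abs_sum_le_sum_abs _ _
      _ ≤ ∑ x, (R ^ (n % k)) i x * (1 - e) ^ (n / k) := by
          refine Finset.sum_le_sum fun x _ => ?_
          rw [abs_mul, abs_of_nonneg (a0 i x)]
          exact mul_le_mul_of_nonneg_left (hD _ _ _) (a0 i x)
      _ = _ := by rw [← Finset.sum_mul, a1]; simp
  rw [tendsto_iff_norm_sub_tendsto_zero]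
  refine squeeze_zero (fun _ => norm_nonneg _) (fun n => hB n) ?_
  exact (tendsto_pow_atTop_nhds_zero_of_lt_one hc0 (by linarith)).comp
    (Nat.tendsto_div_const_atTop hk.ne')

open scoped Classical in
/-- number of swaps -/
noncomputable def hzN (d : ℕ) : ℕ := (Finset.univ.filter fun t : Perm (Fin d) => t.IsSwap).card

open scoped Classical in
/-- adjacency matrix -/
noncomputable def hzA (d : ℕ) : Matrix (Perm (Fin d)) (Perm (Fin d)) ℝ :=
  fun σ ρ => if (σ⁻¹ * ρ).IsSwap then 1 else 0

/-- uniform matrix on parity classes -/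
noncomputable def hzU (d : ℕ) : Matrix (Perm (Fin d)) (Perm (Fin d)) ℝ :=
  fun σ ρ => if Perm.sign σ = Perm.sign ρ then 2 / (Nat.factorial d : ℝ) else 0

lemma hzN_eq (d : ℕ) (hd : 2 ≤ d) : (hzN d : ℝ) = d * (d - 1) / 2 := by
  classical
  have h := Equiv.Perm.card_of_cycleType_mul_eq (Fin d) {2}
  have h2 : hzN d = (Finset.univ.filter fun t : Perm (Fin d) => t.cycleType = {2}).card := by
    unfold hzN
    congr 1
    ext t
    simp [Equiv.Perm.isSwap_iff_cycleType]
  rw [← h2] at h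
  simp [hd] at h
  obtain ⟨m, rfl⟩ := Nat.exists_eq_add_of_le' hd
  rw [Nat.add_sub_cancel, Nat.factorial_succ, Nat.factorial_succ] at h
  have hm : (0 : ℝ) < m.factorial := by exact_mod_cast m.factorial_pos
  have h' : (hzN (m + 2) : ℝ) * (m.factorial * 2) = (m + 1 + 1) * ((m + 1) * m.factorial) := by
    exact_mod_cast h
  push_cast
  have : ((hzN (m + 2) : ℝ) * 2 - (m + 2) * (m + 1)) * m.factorial = 0 := by linarith
  rcases mul_eq_zero.1 this with h3 | h3
  · linarith
  · exact absurd h3 hm.ne'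

lemma hzA_row (d : ℕ) (σ : Perm (Fin d)) : ∑ ρ, hzA d σ ρ = hzN d := by
  classical
  rw [← Equiv.sum_comp (Equiv.mulLeft σ)]
  simp [hzA, hzN]

lemma hzA_symm (d : ℕ) : (hzA d).transpose = hzA d := by
  classical
  ext σ ρ
  simp only [Matrix.transpose_apply, hzA]
  have : (ρ⁻¹ * σ).IsSwap ↔ (σ⁻¹ * ρ).IsSwap := by
    rw [← Equiv.Perm.card_support_eq_two, ← Equiv.Perm.card_support_eq_two,
      ← Equiv.Perm.support_inv, mul_inv_rev, inv_inv]
  simp [this]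

lemma hzU_row (d : ℕ) (hd : 2 ≤ d) (σ : Perm (Fin d)) : ∑ ρ, hzU d σ ρ = 1 := by
  classical
  haveI : Nontrivial (Fin d) := Fin.nontrivial_iff_two_le.2 hd
  rw [← Equiv.sum_comp (Equiv.mulLeft σ)]
  simp only [hzU, Equiv.coe_mulLeft, map_mul, left_eq_mul]
  rw [← Finset.sum_filter, Finset.sum_const]
  have h := two_mul_nat_card_alternatingGroup (α := Fin d)
  have h2 : Nat.card (alternatingGroup (Fin d)) =
      (Finset.univ.filter fun t : Perm (Fin d) => Perm.sign t = 1).card := by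
    rw [Nat.card_eq_fintype_card]
    exact Fintype.card_of_subtype _ (by simp [Equiv.Perm.mem_alternatingGroup])
  rw [h2, Nat.card_perm, Nat.card_eq_fintype_card, Fintype.card_fin] at h
  have hm : (0 : ℝ) < d.factorial := by exact_mod_cast d.factorial_pos
  rw [nsmul_eq_mul, ← mul_div_assoc, div_eq_one_iff_eq hm.ne', mul_comm]
  exact_mod_cast h

lemma hz_mulU (d : ℕ) (M : Matrix (Perm (Fin d)) (Perm (Fin d)) ℝ) (h1 : ∀ σ, ∑ ρ, M σ ρ = 1)
    (hs : ∀ σ ρ, M σ ρ ≠ 0 → Perm.sign σ = Perm.sign ρ) : M * hzU d = hzU d := by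
  ext σ ρ
  rw [Matrix.mul_apply]
  trans ∑ τ, M σ τ * hzU d σ ρ
  · refine Finset.sum_congr rfl fun τ _ => ?_
    by_cases h : M σ τ = 0
    · simp [h]
    · simp [hzU, hs _ _ h]
  · rw [← Finset.sum_mul, h1, one_mul]

lemma hzA_nonneg (d : ℕ) (σ ρ : Perm (Fin d)) : 0 ≤ hzA d σ ρ := by
  simp only [hzA]; split_ifs <;> norm_num

lemma hzA_sign (d n : ℕ) : ∀ σ ρ : Perm (Fin d), (hzA d ^ n) σ ρ ≠ 0 →
    Perm.sign ρ = Perm.sign σ * (-1) ^ n := by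
  classical
  induction n with
  | zero =>
    intro σ ρ h
    simp only [pow_zero, Matrix.one_apply] at h
    have : σ = ρ := by by_contra h2; simp [h2] at h
    simp [this]
  | succ n ih =>
    intro σ ρ h
    rw [pow_succ, Matrix.mul_apply] at h
    obtain ⟨τ, -, hτ⟩ := Finset.exists_ne_zero_of_sum_ne_zero h
    have h1 := ih σ τ (left_ne_zero_of_mul hτ)
    have h2 : (τ⁻¹ * ρ).IsSwap := by
      by_contra h2
      exact right_ne_zero_of_mul hτ (by simp [hzA, h2])
    have h3 := h2.sign_eq
    rw [map_mul, Perm.sign_inv] at h3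
    have h4 : Perm.sign ρ = Perm.sign τ * -1 := by
      rw [← h3, ← mul_assoc, Int.units_mul_self, one_mul]
    rw [h4, h1, pow_succ, mul_assoc]

lemma hzA_pow_nonneg (d n : ℕ) (σ ρ : Perm (Fin d)) : 0 ≤ (hzA d ^ n) σ ρ :=
  (hz_pow_stoch (hzA d) _ (hzA_nonneg d) (hzA_row d) n).1 σ ρ

lemma hzA_reach (d : ℕ) (σ g : Perm (Fin d)) : ∃ n, 0 < (hzA d ^ n) σ (σ * g) := by
  classical
  induction g using Equiv.Perm.swap_induction_on' with
  | one => exact ⟨0, by simp⟩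
  | mul_swap f x y hxy ih =>
    obtain ⟨n, hn⟩ := ih
    refine ⟨n + 1, ?_⟩
    rw [pow_succ, Matrix.mul_apply]
    refine Finset.sum_pos' (fun τ _ => mul_nonneg (hzA_pow_nonneg _ _ _ _) (hzA_nonneg _ _ _))
      ⟨σ * f, Finset.mem_univ _, mul_pos hn ?_⟩
    have : ((σ * f)⁻¹ * (σ * (f * swap x y))).IsSwap := by
      refine ⟨x, y, hxy, by group⟩
    simp only [hzA, this, if_true]; norm_num

lemma hzA_count (d n : ℕ) : ∀ σ ρ : Perm (Fin d), (hzA d ^ n) σ ρ =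
    Nat.card {τ : Fin n → Perm (Fin d) // (∀ i, (τ i).IsSwap) ∧ σ * (List.ofFn τ).prod = ρ} := by
  classical
  induction n with
  | zero =>
    intro σ ρ
    by_cases h : σ = ρ <;> simp [h, Matrix.one_apply]
  | succ n ih =>
    intro σ ρ
    rw [pow_succ', Matrix.mul_apply, ← Equiv.sum_comp (Equiv.mulLeft σ)]
    simp only [ih, Nat.card_eq_fintype_card, Fintype.card_subtype, Finset.card_filter]
    rw [← Equiv.sum_comp (Fin.consEquiv (fun _ => Perm (Fin d))), Fintype.sum_prod_type]
    push_cast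
    refine Finset.sum_congr rfl fun t _ => ?_
    rw [Finset.mul_sum]
    refine Finset.sum_congr rfl fun τ _ => ?_
    by_cases ht : t.IsSwap <;>
      simp [hzA, ht, Fin.forall_fin_succ, List.ofFn_succ, mul_assoc]

lemma hz_lim (d : ℕ) (hd : 2 ≤ d) :
    Tendsto (fun n => (hzA d ^ (2 * n)) 1 1 / (hzN d : ℝ) ^ (2 * n)) atTop
      (𝓝 (2 / (Nat.factorial d : ℝ))) := by
  classical
  have hN : 0 < (hzN d : ℝ) := by
    rw [hzN_eq d hd]
    have : (2 : ℝ) ≤ d := by exact_mod_cast hd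
    have : (0 : ℝ) < (d : ℝ) * (d - 1) := mul_pos (by linarith) (by linarith)
    linarith
  set R : Matrix (Perm (Fin d)) (Perm (Fin d)) ℝ := ((hzN d : ℝ) ^ 2)⁻¹ • hzA d ^ 2 with hR
  have hRn : ∀ n σ ρ, (R ^ n) σ ρ = (hzA d ^ (2 * n)) σ ρ / (hzN d : ℝ) ^ (2 * n) := by
    intro n σ ρ
    rw [hR, smul_pow, ← pow_mul, Matrix.smul_apply, inv_pow, ← pow_mul, smul_eq_mul,
      div_eq_inv_mul]
  have hR' : ∀ σ ρ, R σ ρ = (hzA d ^ 2) σ ρ / (hzN d : ℝ) ^ 2 := by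
    intro σ ρ; simpa using hRn 1 σ ρ
  have hR0 : ∀ σ ρ, 0 ≤ R σ ρ := fun σ ρ => by
    rw [hR']; exact div_nonneg (hzA_pow_nonneg _ _ _ _) (by positivity)
  have hR1 : ∀ σ, ∑ ρ, R σ ρ = 1 := fun σ => by
    simp only [hR']
    rw [← Finset.sum_div, (hz_pow_stoch (hzA d) _ (hzA_nonneg d) (hzA_row d) 2).2 σ]
    exact div_self (by positivity)
  have hU0 : ∀ σ ρ, 0 ≤ hzU d σ ρ := fun σ ρ => by
    simp only [hzU]; split_ifs <;> positivity
  have hRU : R * hzU d = hzU d := by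
    refine hz_mulU d R hR1 fun σ ρ h => ?_
    rw [hR'] at h
    have := hzA_sign d 2 σ ρ (div_ne_zero_iff.1 h).1
    simpa using this.symm
  have hUt : (hzU d).transpose = hzU d := by
    ext σ ρ; simp [hzU, eq_comm]
  have hUR : hzU d * R = hzU d := by
    have : R.transpose = R := by
      rw [hR, Matrix.transpose_smul, Matrix.transpose_pow, hzA_symm]
    have h2 := congrArg Matrix.transpose hRU
    rwa [Matrix.transpose_mul, this, hUt] at h2
  have hUU : hzU d * hzU d = hzU d := by
    refine hz_mulU d _ (hzU_row d hd) fun σ ρ h => ?_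
    by_contra h2
    exact h (by simp [hzU, h2])
  -- positivity
  have hdiag : ∀ σ, 0 < R σ σ := by
    intro σ
    haveI : Nontrivial (Fin d) := Fin.nontrivial_iff_two_le.2 hd
    obtain ⟨x, y, hxy⟩ := exists_pair_ne (Fin d)
    rw [hR']
    refine div_pos ?_ (by positivity)
    rw [pow_two, Matrix.mul_apply]
    refine Finset.sum_pos' (fun τ _ => mul_nonneg (hzA_nonneg _ _ _) (hzA_nonneg _ _ _))
      ⟨σ * swap x y, Finset.mem_univ _, ?_⟩
    have h1 : (σ⁻¹ * (σ * swap x y)).IsSwap := ⟨x, y, hxy, by group⟩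
    have h2 : ((σ * swap x y)⁻¹ * σ).IsSwap := ⟨x, y, hxy, by simp⟩
    simp only [hzA, h1, h2, if_true]; norm_num
  have hmono : ∀ n m σ ρ, n ≤ m → 0 < (R ^ n) σ ρ → 0 < (R ^ m) σ ρ := by
    intro n m σ ρ hnm h
    induction m, hnm using Nat.le_induction with
    | base => exact h
    | succ m _ ih =>
      rw [pow_succ, Matrix.mul_apply]
      exact Finset.sum_pos' (fun τ _ => mul_nonneg ((hz_pow_stoch R 1 hR0 hR1 m).1 _ _) (hR0 _ _))
        ⟨ρ, Finset.mem_univ _, mul_pos ih (hdiag ρ)⟩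
  have hreach : ∀ p : Perm (Fin d) × Perm (Fin d), ∃ n, Perm.sign p.1 = Perm.sign p.2 →
      0 < (R ^ n) p.1 p.2 := by
    rintro ⟨σ, ρ⟩
    obtain ⟨n, hn⟩ := hzA_reach d σ (σ⁻¹ * ρ)
    rw [mul_inv_cancel_left] at hn
    refine ⟨n / 2, fun hs => ?_⟩
    simp only at hs
    have h1 := hzA_sign d n σ ρ hn.ne'
    rw [hs, left_eq_mul] at h1
    have hev : Even n := by
      by_contra h2
      rw [Nat.not_even_iff_odd] at h2
      rw [h2.neg_one_pow] at h1
      exact absurd h1 (by decide)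
    rw [hRn, Nat.two_mul_div_two_of_even hev]
    positivity
  choose f hf using hreach
  set k := Finset.univ.sup f + 1 with hk
  have hkpos : ∀ σ ρ, Perm.sign σ = Perm.sign ρ → 0 < (R ^ k) σ ρ := fun σ ρ h =>
    hmono (f (σ, ρ)) k σ ρ ((Finset.le_sup (Finset.mem_univ _)).trans (Nat.le_succ _))
      (hf (σ, ρ) h)
  have hm : (0 : ℝ) < d.factorial := by exact_mod_cast d.factorial_pos
  obtain ⟨e, he, he1, hek⟩ : ∃ e : ℝ, 0 < e ∧ e ≤ 1 ∧ ∀ i j, e * hzU d i j ≤ (R ^ k) i j := by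
    have : ∀ p : Perm (Fin d) × Perm (Fin d), ∃ e : ℝ, 0 < e ∧ e * hzU d p.1 p.2 ≤ (R ^ k) p.1 p.2 := by
      rintro ⟨σ, ρ⟩
      by_cases h : Perm.sign σ = Perm.sign ρ
      · refine ⟨(R ^ k) σ ρ / (2 / d.factorial), div_pos (hkpos _ _ h) (by positivity), ?_⟩
        simp only [hzU, h, if_true]
        rw [div_mul_cancel₀ _ (by positivity)]
      · refine ⟨1, one_pos, ?_⟩
        simp only [hzU, h, if_false, mul_zero]
        exact (hz_pow_stoch R 1 hR0 hR1 k).1 _ _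
    choose c hc0 hc using this
    obtain ⟨p, -, hp⟩ := Finset.exists_min_image Finset.univ c ⟨(1, 1), Finset.mem_univ _⟩
    refine ⟨min 1 (c p), lt_min one_pos (hc0 p), min_le_left _ _, fun i j => ?_⟩
    refine le_trans ?_ (hc (i, j))
    exact mul_le_mul_of_nonneg_right ((min_le_right _ _).trans (hp _ (Finset.mem_univ _))) (hU0 i j)
  have key := hz_markov R (hzU d) hR0 hR1 hU0 (hzU_row d hd) hRU hUR hUU k (Nat.succ_pos _)
    e he he1 hek 1 1
  simpa [hRn, hzU] using key

lemma hz_bad (d n : ℕ) :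
    (hzA d ^ n) 1 1 - hzN d * ((hzN d : ℝ) - 1) ^ n ≤
      Nat.card {τ : Fin n → Perm (Fin d) //
      (∀ i, (τ i).IsSwap) ∧ (List.ofFn τ).prod = 1 ∧
      ∀ x y : Fin d, ∃ σ ∈ Subgroup.closure (Set.range τ), σ x = y} := by
  classical
  rw [hzA_count]
  simp only [one_mul, Nat.card_eq_fintype_card, Fintype.card_subtype]
  set S := Finset.univ.filter fun t : Perm (Fin d) => t.IsSwap with hS
  have hSN : S.card = hzN d := by simp only [hS, hzN]
  set B := S.biUnion fun t => Fintype.piFinset fun _ : Fin n => S.erase t with hB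
  have hBc : (B.card : ℝ) ≤ hzN d * ((hzN d : ℝ) - 1) ^ n := by
    have h1 : B.card ≤ ∑ t ∈ S, (hzN d - 1) ^ n := by
      refine Finset.card_biUnion_le.trans (Finset.sum_le_sum fun t ht => ?_)
      simp [Finset.card_erase_of_mem ht, hSN]
    rw [Finset.sum_const, hSN, smul_eq_mul] at h1
    rcases Nat.eq_zero_or_pos (hzN d) with h0 | h0
    · simp [h0] at h1 ⊢; simp [h1]
    · have : ((hzN d : ℝ) - 1) = ((hzN d - 1 : ℕ) : ℝ) := by push_cast [Nat.cast_sub h0]; simp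
      rw [this]
      exact_mod_cast h1
  rw [sub_le_iff_le_add]
  refine le_trans ?_ (add_le_add_right hBc _)
  norm_cast
  refine le_trans (Finset.card_le_card ?_) (Finset.card_union_le _ _)
  intro τ hτ
  simp only [Finset.mem_filter, Finset.mem_univ, true_and] at hτ
  by_cases hb : ∃ t ∈ S, ∀ i, τ i ≠ t
  · obtain ⟨t, ht, h⟩ := hb
    refine Finset.mem_union_right _ (Finset.mem_biUnion.2 ⟨t, ht, ?_⟩)
    rw [Fintype.mem_piFinset]
    intro i
    simp [hS, h i, hτ.1 i]
  · push Not at hb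
    refine Finset.mem_union_left _ ?_
    simp only [Finset.mem_filter, Finset.mem_univ, true_and]
    refine ⟨hτ.1, hτ.2, fun x y => ?_⟩
    by_cases hxy : x = y
    · exact ⟨1, one_mem _, by simp [hxy]⟩
    · obtain ⟨i, hi⟩ := hb (swap x y) (by simp only [hS, Finset.mem_filter, Finset.mem_univ, true_and]; exact ⟨x, y, hxy, rfl⟩)
      exact ⟨swap x y, Subgroup.subset_closure ⟨i, hi⟩, swap_apply_left x y⟩

lemma hz_le (d n : ℕ) :
    (Nat.card {τ : Fin n → Perm (Fin d) //
      (∀ i, (τ i).IsSwap) ∧ (List.ofFn τ).prod = 1 ∧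
      ∀ x y : Fin d, ∃ σ ∈ Subgroup.closure (Set.range τ), σ x = y} : ℝ) ≤ (hzA d ^ n) 1 1 := by
  classical
  rw [hzA_count]
  simp only [one_mul]
  norm_cast
  exact Nat.card_le_card_of_injective
    (Subtype.map id fun τ h => ⟨h.1, h.2.1⟩) (Subtype.map_injective _ Function.injective_id)

/-- for fixed `d ≥ 3`, the connected simple Hurwitz numbers grow like
`H_{g,d} ∼ (2/(d!)²) (d(d-1)/2)^(2d+2g-2)` as `g → ∞`. -/
theorem hurwitz_large_genus (d : ℕ) (hd : 3 ≤ d) :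
    Tendsto
      (fun g : ℕ =>
        hurwitz g d * (Nat.factorial d : ℝ) ^ 2 / 2 *
          (2 / ((d : ℝ) * ((d : ℝ) - 1))) ^ (2 * d + 2 * g - 2))
      atTop (𝓝 1) := by
  have hd2 : 2 ≤ d := by omega
  have hN := hzN_eq d hd2
  have hd' : (2 : ℝ) ≤ d := by exact_mod_cast hd2
  have hdd : (2 : ℝ) ≤ (d : ℝ) * (d - 1) := by nlinarith
  have hN1 : 1 ≤ (hzN d : ℝ) := by rw [hN]; linarith
  have hNpos : 0 < (hzN d : ℝ) := by linarith
  have hm : (0 : ℝ) < d.factorial := by exact_mod_cast d.factorial_pos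
  have hinv : 2 / ((d : ℝ) * ((d : ℝ) - 1)) = (hzN d : ℝ)⁻¹ := by rw [hN, inv_div]
  have hsub : Tendsto (fun g : ℕ => g + (d - 1)) atTop atTop := tendsto_add_atTop_nat _
  have L1 := (hz_lim d hd2).comp hsub
  have L1' := L1.const_mul ((d.factorial : ℝ) / 2)
  have hone : (d.factorial : ℝ) / 2 * (2 / d.factorial) = 1 := by field_simp
  rw [hone] at L1'
  have hr0 : 0 ≤ ((hzN d : ℝ) - 1) / hzN d := div_nonneg (by linarith) hNpos.le
  have hr1 : ((hzN d : ℝ) - 1) / hzN d < 1 := by rw [div_lt_one hNpos]; linarith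
  have hsub2 : Tendsto (fun g : ℕ => 2 * (g + (d - 1))) atTop atTop :=
    hsub.const_mul_atTop' (by norm_num)
  have L2 := ((tendsto_pow_atTop_nhds_zero_of_lt_one hr0 hr1).comp hsub2).const_mul
    ((d.factorial : ℝ) / 2 * hzN d)
  have L3 := L1'.sub L2
  rw [mul_zero, sub_zero] at L3
  have hb : ∀ g, 2 * g + 2 * d - 2 = 2 * (g + (d - 1)) := fun g => by omega
  have hb' : ∀ g, 2 * d + 2 * g - 2 = 2 * (g + (d - 1)) := fun g => by omega
  refine tendsto_of_tendsto_of_tendsto_of_le_of_le L3 L1' (fun g => ?_) (fun g => ?_)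
  · have h := hz_bad d (2 * (g + (d - 1)))
    simp only [Function.comp, hurwitz, hinv, hb']
    rw [hb g]
    set n := 2 * (g + (d - 1))
    rw [inv_pow, div_pow]
    have hp : 0 < (hzN d : ℝ) ^ n := pow_pos hNpos n
    have := mul_le_mul_of_nonneg_left h
      (show 0 ≤ (d.factorial : ℝ) / 2 * ((hzN d : ℝ) ^ n)⁻¹ by positivity)
    refine le_trans (le_of_eq ?_) (this.trans (le_of_eq ?_))
    · field_simp
    · field_simp
  · have h := hz_le d (2 * (g + (d - 1)))
    simp only [Function.comp, hurwitz, hinv, hb']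
    rw [hb g]
    set n := 2 * (g + (d - 1))
    rw [inv_pow]
    have hp : 0 < (hzN d : ℝ) ^ n := pow_pos hNpos n
    have := mul_le_mul_of_nonneg_left h
      (show 0 ≤ (d.factorial : ℝ) / 2 * ((hzN d : ℝ) ^ n)⁻¹ by positivity)
    refine le_trans (le_of_eq ?_) (this.trans (le_of_eq ?_))
    · field_simp
    · field_simp
end
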